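/- arXiv:1411.0771 — 8 statements merged into one kernel-verified Lean document; each statement's English description precedes it below -/
import Mathlib

section
/- For all integers n ≥ 3 and e with n²/4 < e ≤ n(n−1)/2, we have Tr(n,e) ≤ g(n,e). -/
/-!
Given `a + b + c = n` admissible for `g(n,e)`, split the vertices into parts `A`, `B`, `C` of these
sizes and consider the graph whose edges are all pairs inside `A`, between `A` and `B`, and between
`B` and `C`. A `B`-`C` edge lies in no triangle: every neighbour of a vertex of `C` is in `B`, and
`B` is independent. This persists in subgraphs. Since `b * c ≤ n² / 4 < e`, while the graph has at
least `e` edges, edges other than the `B`-`C` ones can be deleted until exactly `e` remain, and then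
at most `e - b * c` edges lie in a triangle (`exists_graph_of_partition`). The bound passes to the
infimum defining `g(n,e)` because the set there is nonempty, as `(a, b, c) = (n, 0, 0)` shows.
-/

open scoped Classical

/-- An edge (as an element of `Sym2`) of `G` that lies in at least one triangle of `G`. -/
def triangularEdge {n : ℕ} (G : SimpleGraph (Fin n)) (e : Sym2 (Fin n)) : Prop :=
  ∃ u v : Fin n, e = s(u, v) ∧ G.Adj u v ∧ ∃ w, G.Adj u w ∧ G.Adj v w

/-- `Tr(G)`: the number of edges of `G` lying in at least one triangle. -/
noncomputable def trCount {n : ℕ} (G : SimpleGraph (Fin n)) : ℕ :=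
  {e ∈ G.edgeSet | triangularEdge G e}.ncard

/-- `Tr(n,e)`: the minimum of `Tr(G)` over simple graphs with `n` vertices and `e` edges. -/
noncomputable def TrNum (n e : ℕ) : ℕ :=
  sInf {m : ℕ | ∃ G : SimpleGraph (Fin n), G.edgeSet.ncard = e ∧ trCount G = m}

/-- `g(n,e) = min {e - b*c : a,b,c ∈ ℕ, a+b+c = n, a(a-1)/2 + ab + bc ≥ e}`. -/
noncomputable def gNum (n e : ℕ) : ℝ :=
  sInf {x : ℝ | ∃ a b c : ℕ, a + b + c = n ∧ e ≤ a * (a - 1) / 2 + a * b + b * c ∧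
    x = (e : ℝ) - (b : ℝ) * (c : ℝ)}

/-- The unordered pairs with one element in `s` and the other in `t`. -/
noncomputable def crossPairs {V : Type*} (s t : Finset V) : Finset (Sym2 V) :=
  (s ×ˢ t).image fun p => s(p.1, p.2)

lemma mem_crossPairs {V : Type*} {s t : Finset V} {u v : V} :
    s(u, v) ∈ crossPairs s t ↔ (u ∈ s ∧ v ∈ t) ∨ (v ∈ s ∧ u ∈ t) := by
  simp only [crossPairs, Finset.mem_image, Finset.mem_product, Prod.exists, Sym2.eq_iff]
  grind

lemma card_crossPairs {V : Type*} {s t : Finset V} (h : Disjoint s t) :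
    (crossPairs s t).card = s.card * t.card := by
  rw [crossPairs, Finset.card_image_of_injOn, Finset.card_product]
  rintro ⟨x, y⟩ hx ⟨z, w⟩ hz hxz
  rw [Finset.disjoint_left] at h
  simp only [Finset.coe_product, Set.mem_prod, Finset.mem_coe, Sym2.eq_iff] at hx hz hxz
  grind

/-- The unordered pairs of distinct elements of `s`. -/
noncomputable def innerPairs {V : Type*} (s : Finset V) : Finset (Sym2 V) :=
  s.offDiag.image fun p => s(p.1, p.2)

lemma mem_innerPairs {V : Type*} {s : Finset V} {u v : V} :
    s(u, v) ∈ innerPairs s ↔ u ∈ s ∧ v ∈ s ∧ u ≠ v := by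
  simp only [innerPairs, Finset.mem_image, Finset.mem_offDiag, Prod.exists, Sym2.eq_iff]
  grind

lemma card_innerPairs {V : Type*} (s : Finset V) :
    (innerPairs s).card = s.card * (s.card - 1) / 2 := by
  rw [← Nat.choose_two_right, ← Sym2.card_image_offDiag]
  rfl

/-- For pairwise disjoint vertex classes `A`, `B`, `C`, if `e` lies between the number of `B`-`C`
pairs and the total number of pairs inside `A`, between `A` and `B`, and between `B` and `C`, then
some graph with `e` edges has at most `e - |B||C|` edges in triangles: one in which all `B`-`C`
pairs are edges, none of them in a triangle. -/
lemma exists_graph_of_partition {n : ℕ} (A B C : Finset (Fin n)) (e : ℕ)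
    (hAB : Disjoint A B) (hAC : Disjoint A C) (hBC : Disjoint B C)
    (hle : B.card * C.card ≤ e)
    (he : e ≤ A.card * (A.card - 1) / 2 + A.card * B.card + B.card * C.card) :
    ∃ G : SimpleGraph (Fin n), G.edgeSet.ncard = e ∧ trCount G ≤ e - B.card * C.card := by
  have hAB' := Finset.disjoint_left.1 hAB
  have hAC' := Finset.disjoint_left.1 hAC
  have hBC' := Finset.disjoint_left.1 hBC
  set T := crossPairs B C with hT
  set S := innerPairs A ∪ crossPairs A B ∪ T with hS
  have hcard : S.card = A.card * (A.card - 1) / 2 + A.card * B.card + B.card * C.card := by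
    rw [hS, Finset.card_union_of_disjoint, Finset.card_union_of_disjoint, card_innerPairs,
      card_crossPairs hAB, card_crossPairs hBC]
    all_goals
      rw [Finset.disjoint_left]
      rintro ⟨u, v⟩
      simp only [Finset.mem_union, mem_crossPairs, mem_innerPairs, hT]
      grind
  obtain ⟨E, hTE, hES, hE⟩ := Finset.exists_subsuperset_card_eq
    (Finset.subset_union_right : T ⊆ S) ((card_crossPairs hBC).trans_le hle) (hcard ▸ he)
  have hmem : ∀ u v, s(u, v) ∈ E → (u ∈ A ∧ v ∈ A ∧ u ≠ v) ∨ (u ∈ A ∧ v ∈ B) ∨ (v ∈ A ∧ u ∈ B) ∨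
      (u ∈ B ∧ v ∈ C) ∨ (v ∈ B ∧ u ∈ C) := by
    intro u v h
    have := hES h
    simp only [hT, Finset.mem_union, mem_crossPairs, mem_innerPairs] at this
    tauto
  have hedge : (SimpleGraph.fromEdgeSet (E : Set (Sym2 (Fin n)))).edgeSet = E := by
    rw [SimpleGraph.edgeSet_fromEdgeSet, sdiff_eq_left, Set.disjoint_left]
    rintro ⟨u, v⟩ h hd
    have := hmem u v h
    have hd' : u = v := by simpa using hd
    grind
  refine ⟨SimpleGraph.fromEdgeSet (E : Set (Sym2 (Fin n))), ?_, ?_⟩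
  · rw [hedge, Set.ncard_coe_finset, hE]
  · rw [trCount, ← hE, ← card_crossPairs hBC, ← Finset.card_sdiff_of_subset hTE,
      ← Set.ncard_coe_finset]
    refine Set.ncard_le_ncard ?_ (Finset.finite_toSet _)
    rintro _ ⟨hxE, u, v, rfl, -, w, huw, hvw⟩
    rw [hedge] at hxE
    rw [SimpleGraph.fromEdgeSet_adj] at huw hvw
    have h1 := hmem u w huw.1
    have h2 := hmem v w hvw.1
    simp only [Finset.coe_sdiff, Set.mem_sdiff, Finset.mem_coe, hT, mem_crossPairs]
    refine ⟨hxE, ?_⟩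
    grind

lemma exists_partition {n a b c : ℕ} (h : a + b + c = n) :
    ∃ A B C : Finset (Fin n), Disjoint A B ∧ Disjoint A C ∧ Disjoint B C ∧
      A.card = a ∧ B.card = b ∧ C.card = c := by
  obtain ⟨A, -, hA⟩ := Finset.exists_subset_card_eq
    (s := (Finset.univ : Finset (Fin n))) (n := a) (by simp; omega)
  have hAc : Aᶜ.card = b + c := by rw [Finset.card_compl, hA, Fintype.card_fin]; omega
  obtain ⟨B, hBA, hB⟩ := Finset.exists_subset_card_eq (s := Aᶜ) (n := b) (by omega)
  refine ⟨A, B, Aᶜ \ B, ?_, ?_, Finset.disjoint_sdiff, hA, hB, ?_⟩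
  · exact (disjoint_compl_right (a := A)).mono_right hBA
  · exact (disjoint_compl_right (a := A)).mono_right Finset.sdiff_subset
  · rw [Finset.card_sdiff_of_subset hBA]; omega

/-- For all integers `n ≥ 3` and `e` with `n²/4 < e ≤ n(n-1)/2`, `Tr(n,e) ≤ g(n,e)`. -/
theorem trNum_le_gNum (n e : ℕ) (hn : 3 ≤ n)
    (he1 : (n : ℝ) ^ 2 / 4 < (e : ℝ)) (he2 : e ≤ n * (n - 1) / 2) :
    (TrNum n e : ℝ) ≤ gNum n e := by
  refine le_csInf ⟨_, n, 0, 0, by simp, by simpa using he2, rfl⟩ ?_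
  rintro _ ⟨a, b, c, habc, he, rfl⟩
  -- `4bc ≤ (b + c)² ≤ n² < 4e`
  have hbc : b * c ≤ e := by
    have h1 : (n : ℝ) = a + b + c := by rw [← habc]; push_cast; ring
    have h2 : (b : ℝ) * c ≤ e := by
      have ha : (0 : ℝ) ≤ a := Nat.cast_nonneg a
      have hb : (0 : ℝ) ≤ b := Nat.cast_nonneg b
      have hc : (0 : ℝ) ≤ c := Nat.cast_nonneg c
      rw [h1] at he1
      nlinarith [sq_nonneg ((b : ℝ) - c), mul_nonneg ha hb, mul_nonneg ha hc, mul_nonneg ha ha]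
    exact_mod_cast h2
  obtain ⟨A, B, C, hAB, hAC, hBC, rfl, rfl, rfl⟩ := exists_partition habc
  obtain ⟨G, hG, hTr⟩ := exists_graph_of_partition A B C e hAB hAC hBC hbc he
  have hmin : TrNum n e ≤ e - B.card * C.card :=
    le_trans (Nat.sInf_le (m := trCount G) ⟨G, hG, rfl⟩) hTr
  calc (TrNum n e : ℝ) ≤ ((e - B.card * C.card : ℕ) : ℝ) := by exact_mod_cast hmin
    _ = _ := by rw [Nat.cast_sub hbc]; push_cast; ring
end

section
/- For all integers n ≥ 3 and e with n²/4 < e ≤ n(n−1)/2, we have g(n,e) − (3/2)·n ≤ Tr(n,e) ≤ g(n,e). -/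
/-!
The upper bound comes from the graph with parts of sizes `a`, `b`, `c` in which the first part is a
clique and the pairs first-second and second-third are complete: its `b * c` edges between the
second and third parts lie in no triangle, and the other edges can be deleted until `e` remain.

The lower bound is a Zykov symmetrization carried out for two quadratic forms at once. Put weight
`1` on each vertex of a graph `G`. Among all nonnegative weightings of total mass `n` that have at
least the weighted number of edges and of non-triangular edges of `G`, take one of minimal support
(`Extremal`). A mass-preserving direction inside the support along which neither form decreases
would allow the support to shrink (`Extremal.no_direction`). Directions on two vertices, on three
independent vertices and on two disjoint non-triangular edges show that the support spans at most
one non-triangular edge `uv` (`Extremal.unique_edge`). With `b ≥ c` the weights of `u` and `v`,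
and `a` the remaining mass, the weighted number of non-triangular edges is `b * c` and that of all
edges is at most `a ^ 2 / 2 + a * b + b * c` (`exists_real_parts`). Rounding `a`, `b`, `c` to
integers costs at most `3 / 2 * n` (`exists_nat_parts`).
-/

open scoped Classical

/-! ### Weighted edge counts -/

section Symm
variable {V : Type*}

/-- The edges of `G` that form no triangle of `G` with a third vertex in `S`. For `S = Set.univ`
these are the non-triangular edges of `G`. -/
def nonTri (G : SimpleGraph V) (S : Set V) : SimpleGraph V where
  Adj u v := G.Adj u v ∧ ∀ w ∈ S, ¬ (G.Adj u w ∧ G.Adj v w)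
  symm := ⟨fun _ _ h => ⟨h.1.symm, fun w hw hh => h.2 w hw ⟨hh.2, hh.1⟩⟩⟩
  loopless := ⟨fun _ h => h.1.ne rfl⟩

theorem nonTri_anti (G : SimpleGraph V) {S T : Set V} (h : S ⊆ T) : nonTri G T ≤ nonTri G S :=
  fun _ _ huv => ⟨huv.1, fun w hw => huv.2 w (h hw)⟩

/-- The adjacency matrix entry of `H`, as a real number. -/
noncomputable def adjInd (H : SimpleGraph V) (u v : V) : ℝ := if H.Adj u v then 1 else 0

theorem adjInd_comm (H : SimpleGraph V) (u v : V) : adjInd H u v = adjInd H v u := by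
  simp only [adjInd, H.adj_comm]

theorem adjInd_self (H : SimpleGraph V) (u : V) : adjInd H u u = 0 := by simp [adjInd]

theorem adjInd_of {H : SimpleGraph V} {u v : V} (h : H.Adj u v) : adjInd H u v = 1 := by
  simp [adjInd, h]

theorem adjInd_of_not {H : SimpleGraph V} {u v : V} (h : ¬ H.Adj u v) : adjInd H u v = 0 := by
  simp [adjInd, h]

theorem adjInd_le_one (H : SimpleGraph V) (u v : V) : adjInd H u v ≤ 1 := by
  unfold adjInd; split_ifs <;> simp

theorem adjInd_nonneg (H : SimpleGraph V) (u v : V) : 0 ≤ adjInd H u v := by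
  unfold adjInd; split_ifs <;> simp

variable [Fintype V]

/-- The total weight of the neighbours of `u`; half the partial derivative of `edgeForm H` at `x`
in the coordinate `u`. -/
noncomputable def nbrWeight (H : SimpleGraph V) (x : V → ℝ) (u : V) : ℝ :=
  ∑ v, if H.Adj u v then x v else 0

/-- Twice the weighted number of edges of `H`: the sum of `x u * x v` over ordered adjacent pairs. -/
noncomputable def edgeForm (H : SimpleGraph V) (x : V → ℝ) : ℝ :=
  ∑ u, x u * nbrWeight H x u

theorem nbrWeight_comb (H : SimpleGraph V) (x d : V → ℝ) (τ : ℝ) (u : V) :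
    nbrWeight H (fun v => x v + τ * d v) u = nbrWeight H x u + τ * nbrWeight H d u := by
  unfold nbrWeight
  rw [Finset.mul_sum, ← Finset.sum_add_distrib]
  refine Finset.sum_congr rfl fun v _ => ?_
  split_ifs <;> simp

theorem sum_mul_nbrWeight_comm (H : SimpleGraph V) (x d : V → ℝ) :
    ∑ u, x u * nbrWeight H d u = ∑ u, d u * nbrWeight H x u := by
  unfold nbrWeight
  simp only [Finset.mul_sum]
  rw [Finset.sum_comm]
  refine Finset.sum_congr rfl fun u _ => Finset.sum_congr rfl fun v _ => ?_
  simp only [H.adj_comm v u]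
  split_ifs <;> ring

theorem edgeForm_comb (H : SimpleGraph V) (x d : V → ℝ) (τ : ℝ) :
    edgeForm H (fun v => x v + τ * d v) =
      edgeForm H x + 2 * τ * ∑ u, d u * nbrWeight H x u + τ ^ 2 * edgeForm H d := by
  have h := sum_mul_nbrWeight_comm H x d
  unfold edgeForm
  simp only [nbrWeight_comb]
  have : ∀ u, (x u + τ * d u) * (nbrWeight H x u + τ * nbrWeight H d u) =
      x u * nbrWeight H x u + τ * (x u * nbrWeight H d u) + τ * (d u * nbrWeight H x u)
        + τ ^ 2 * (d u * nbrWeight H d u) := fun u => by ring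
  simp only [this, Finset.sum_add_distrib, ← Finset.mul_sum, h]
  ring

theorem edgeForm_mono {H K : SimpleGraph V} (h : H ≤ K) {x : V → ℝ} (hx : ∀ v, 0 ≤ x v) :
    edgeForm H x ≤ edgeForm K x := by
  unfold edgeForm nbrWeight
  refine Finset.sum_le_sum fun u _ => mul_le_mul_of_nonneg_left ?_ (hx u)
  refine Finset.sum_le_sum fun v _ => ?_
  by_cases h1 : H.Adj u v
  · simp [h1, h h1]
  · simp only [h1, if_false]; split_ifs <;> simp [hx]

/-- Weightings of total mass `m` whose doubled weighted edge count is at least `E` and whose doubled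
weighted count of non-triangular edges is at least `T`. Triangles are only looked for inside the
support of `x`, so that shrinking the support can only create non-triangular edges. -/
structure Feasible (G : SimpleGraph V) (m E T : ℝ) (x : V → ℝ) : Prop where
  nonneg : ∀ v, 0 ≤ x v
  total : ∑ v, x v = m
  edges : E ≤ edgeForm G x
  nontri : T ≤ edgeForm (nonTri G (Function.support x)) x

/-- A feasible weighting with the fewest vertices of nonzero weight. -/
structure Extremal (G : SimpleGraph V) (m E T : ℝ) (x : V → ℝ) : Prop extends
    Feasible G m E T x where
  minimal : ∀ y, Feasible G m E T y → (Function.support x).ncard ≤ (Function.support y).ncard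

theorem exists_extremal {G : SimpleGraph V} {m E T : ℝ} {x : V → ℝ} (hx : Feasible G m E T x) :
    ∃ y, Extremal G m E T y := by
  obtain ⟨y, hy, hmin⟩ := (measure fun y : V → ℝ => (Function.support y).ncard).wf.has_min
    {y | Feasible G m E T y} ⟨x, hx⟩
  exact ⟨y, hy, fun z hz => not_lt.1 (hmin z hz)⟩

/-! ### Extremal weightings -/

namespace Extremal
variable {G : SimpleGraph V} {m E T : ℝ} {x : V → ℝ}

/-- The non-triangular edges relative to the support of an extremal weighting. -/
abbrev nt (_ : Extremal G m E T x) : SimpleGraph V := nonTri G (Function.support x)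

/-- An extremal weighting admits no nonzero mass-preserving direction `d` inside its support along
which both quadratic forms are convex with nonnegative slope: following `d` until some coordinate
vanishes would give a feasible weighting with smaller support. -/
theorem no_direction (h : Extremal G m E T x) (d : V → ℝ) (hsupp : ∀ v, x v = 0 → d v = 0)
    (hd : ∑ v, d v = 0) (hne : ∃ v, d v ≠ 0)
    (hG1 : 0 ≤ ∑ u, d u * nbrWeight G x u) (hG2 : 0 ≤ edgeForm G d)
    (hN1 : 0 ≤ ∑ u, d u * nbrWeight h.nt x u) (hN2 : 0 ≤ edgeForm h.nt d) : False := by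
  have hneg : ∃ v, d v < 0 := by
    by_contra! hc
    obtain ⟨v, hv⟩ := hne
    exact hv ((Finset.sum_eq_zero_iff_of_nonneg fun v _ => hc v).1 hd v (Finset.mem_univ v))
  obtain ⟨v₀, hv₀⟩ := hneg
  obtain ⟨w, hw, hmin⟩ := Finset.exists_min_image (Finset.univ.filter fun v => d v < 0)
    (fun v => x v / (- d v)) ⟨v₀, by simpa using hv₀⟩
  have hdw : d w < 0 := by simpa using hw
  set τ := x w / (- d w) with hτ
  have hτ0 : 0 ≤ τ := div_nonneg (h.nonneg w) (by linarith)
  set y : V → ℝ := fun v => x v + τ * d v with hy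
  have hy0 : ∀ v, 0 ≤ y v := by
    intro v
    rcases lt_or_ge (d v) 0 with hv | hv
    · have := hmin v (by simpa using hv)
      rw [le_div_iff₀ (by linarith)] at this
      simp only [hy]; linarith
    · exact add_nonneg (h.nonneg v) (mul_nonneg hτ0 hv)
  have hsub : Function.support y ⊆ Function.support x := by
    intro v hv hxv
    exact hv (by simp [hy, hxv, hsupp v hxv])
  have hyw : y w = 0 := by
    have := hdw.ne
    simp only [hy, hτ]; field_simp; ring
  have hxw : x w ≠ 0 := fun h0 => hdw.ne (hsupp w h0)
  have hss : Function.support y ⊂ Function.support x :=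
    ⟨hsub, fun hh => hh (show w ∈ Function.support x from hxw) hyw⟩
  have hfe : Feasible G m E T y := by
    refine ⟨hy0, ?_, ?_, ?_⟩
    · simp only [hy, Finset.sum_add_distrib, ← Finset.mul_sum, hd, h.total]; simp
    · rw [hy, edgeForm_comb]
      have := h.edges
      nlinarith [mul_nonneg hτ0 hG1, mul_nonneg hτ0 hN1, mul_nonneg (sq_nonneg τ) hG2, mul_nonneg (sq_nonneg τ) hN2]
    · refine le_trans ?_ (edgeForm_mono (nonTri_anti G hsub) hy0)
      rw [hy, edgeForm_comb]
      have := h.nontri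
      nlinarith [mul_nonneg hτ0 hG1, mul_nonneg hτ0 hN1, mul_nonneg (sq_nonneg τ) hG2, mul_nonneg (sq_nonneg τ) hN2]
  exact absurd (h.minimal y hfe) (not_le.2 (Set.ncard_lt_ncard hss (Set.toFinite _)))


end Extremal

/-- The vector `α e_a + β e_b + γ e_c + δ e_d`; the four vertices need not be distinct. -/
noncomputable def comb (a b c d : V) (α β γ δ : ℝ) (v : V) : ℝ :=
  α * (if v = a then 1 else 0) + β * (if v = b then 1 else 0) + γ * (if v = c then 1 else 0)
    + δ * (if v = d then 1 else 0)

theorem sum_comb_mul (a b c d : V) (α β γ δ : ℝ) (g : V → ℝ) :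
    ∑ v, comb a b c d α β γ δ v * g v = α * g a + β * g b + γ * g c + δ * g d := by
  simp only [comb, add_mul, Finset.sum_add_distrib, mul_assoc, ← Finset.mul_sum, ite_mul, one_mul,
    zero_mul, Finset.sum_ite_eq', Finset.mem_univ, if_true]

theorem nbrWeight_eq_sum (H : SimpleGraph V) (x : V → ℝ) (u : V) :
    nbrWeight H x u = ∑ v, x v * adjInd H u v := by
  unfold nbrWeight adjInd
  exact Finset.sum_congr rfl fun v _ => by split_ifs <;> simp

theorem edgeForm_comb4 (H : SimpleGraph V) (a b c d : V) (α β γ δ : ℝ) :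
    edgeForm H (comb a b c d α β γ δ) =
      2 * (α * β * adjInd H a b + α * γ * adjInd H a c + α * δ * adjInd H a d
        + β * γ * adjInd H b c + β * δ * adjInd H b d + γ * δ * adjInd H c d) := by
  unfold edgeForm
  rw [sum_comb_mul]
  simp only [nbrWeight_eq_sum, sum_comb_mul, adjInd_self]
  rw [adjInd_comm H b a, adjInd_comm H c a, adjInd_comm H d a, adjInd_comm H c b,
    adjInd_comm H d b, adjInd_comm H d c]
  ring

namespace Extremal
variable {G : SimpleGraph V} {m E T : ℝ} {x : V → ℝ}

/-- `no_direction` for a direction supported on at most four vertices. -/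
theorem no_comb (h : Extremal G m E T x) {a b c d : V} (ha : x a ≠ 0) (hb : x b ≠ 0)
    (hc : x c ≠ 0) (hd : x d ≠ 0) (α β γ δ : ℝ) (hsum : α + β + γ + δ = 0)
    (hne : ∃ v, comb a b c d α β γ δ v ≠ 0)
    (hG1 : 0 ≤ α * nbrWeight G x a + β * nbrWeight G x b + γ * nbrWeight G x c
      + δ * nbrWeight G x d)
    (hG2 : 0 ≤ edgeForm G (comb a b c d α β γ δ))
    (hN1 : 0 ≤ α * nbrWeight h.nt x a + β * nbrWeight h.nt x b + γ * nbrWeight h.nt x c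
      + δ * nbrWeight h.nt x d)
    (hN2 : 0 ≤ edgeForm h.nt (comb a b c d α β γ δ)) : False := by
  refine h.no_direction (comb a b c d α β γ δ) ?_ ?_ hne ?_ hG2 ?_ hN2
  · intro v hv
    have h1 : v ≠ a := by rintro rfl; exact ha hv
    have h2 : v ≠ b := by rintro rfl; exact hb hv
    have h3 : v ≠ c := by rintro rfl; exact hc hv
    have h4 : v ≠ d := by rintro rfl; exact hd hv
    simp [comb, h1, h2, h3, h4]
  · have := sum_comb_mul a b c d α β γ δ (fun _ => 1)
    simp only [mul_one] at this
    rw [this, hsum]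
  · rwa [sum_comb_mul]
  · rwa [sum_comb_mul]

theorem not_nt (h : Extremal G m E T x) {u v : V} (huv : ¬ G.Adj u v) : ¬ h.nt.Adj u v :=
  fun hh => huv hh.1

/-- Zykov symmetrization: of two non-adjacent vertices of the support, neither dominates the other
in both forms. -/
theorem no_pair (h : Extremal G m E T x) {u v : V} (hu : x u ≠ 0) (hv : x v ≠ 0) (hne : u ≠ v)
    (huv : ¬ G.Adj u v) (hG : nbrWeight G x v ≤ nbrWeight G x u)
    (hN : nbrWeight h.nt x v ≤ nbrWeight h.nt x u) : False := by
  refine h.no_comb hu hv hv hv 1 (-1) 0 0 (by norm_num) ⟨u, by simp [comb, hne]⟩ ?_ ?_ ?_ ?_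
  · linarith
  · rw [edgeForm_comb4]; simp [adjInd_of_not huv]
  · linarith
  · rw [edgeForm_comb4]; simp [adjInd_of_not (h.not_nt huv)]

/-- The support contains no three pairwise non-adjacent vertices: both forms are linear on the
two-dimensional space of mass-preserving directions on such a triple. -/
theorem no_triple (h : Extremal G m E T x) {u v w : V} (hu : x u ≠ 0) (hv : x v ≠ 0)
    (hw : x w ≠ 0) (huv : u ≠ v) (huw : u ≠ w) (hvw : v ≠ w) (auv : ¬ G.Adj u v)
    (auw : ¬ G.Adj u w) (avw : ¬ G.Adj v w) : False := by
  set fu := nbrWeight G x u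
  set fv := nbrWeight G x v
  set fw := nbrWeight G x w
  by_cases heq : fu = fv
  · rcases le_total (nbrWeight h.nt x u) (nbrWeight h.nt x v) with h1 | h1
    · exact h.no_pair hv hu huv.symm (fun hh => auv hh.symm) heq.le h1
    · exact h.no_pair hu hv huv auv heq.ge h1
  -- The cross product of `(fu, fv, fw)` and `(1, 1, 1)` kills both the total and the `G`-gradient.
  have key : ∀ s : ℝ, s ≠ 0 → 0 ≤ s * ((fv - fw) * nbrWeight h.nt x u
      + (fw - fu) * nbrWeight h.nt x v + (fu - fv) * nbrWeight h.nt x w) → False := by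
    intro s hs hN
    refine h.no_comb hu hv hw hw (s * (fv - fw)) (s * (fw - fu)) (s * (fu - fv)) 0 (by ring)
      ⟨w, ?_⟩ ?_ ?_ ?_ ?_
    · simp [comb, huw.symm, hvw.symm, hs, sub_ne_zero.2 heq]
    · apply le_of_eq; ring
    · rw [edgeForm_comb4]
      simp [adjInd_of_not auv, adjInd_of_not auw, adjInd_of_not avw]
    · linarith
    · rw [edgeForm_comb4]
      simp [adjInd_of_not (h.not_nt auv), adjInd_of_not (h.not_nt auw),
        adjInd_of_not (h.not_nt avw)]
  rcases le_total 0 ((fv - fw) * nbrWeight h.nt x u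
      + (fw - fu) * nbrWeight h.nt x v + (fu - fv) * nbrWeight h.nt x w) with h1 | h1
  · exact key 1 one_ne_zero (by linarith)
  · exact key (-1) (by norm_num) (by linarith)

theorem sub_eq_of_support (h : Extremal G m E T x) {u v : V} 
    (hw : ∀ w, x w ≠ 0 → adjInd G u w - adjInd G v w = adjInd h.nt u w - adjInd h.nt v w) :
    nbrWeight G x u - nbrWeight G x v = nbrWeight h.nt x u - nbrWeight h.nt x v := by
  simp only [nbrWeight_eq_sum, ← Finset.sum_sub_distrib, ← mul_sub]
  refine Finset.sum_congr rfl fun w _ => ?_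
  by_cases h0 : x w = 0
  · simp [h0]
  · rw [hw w h0]

/-- Two disjoint non-triangular edges `ab` and `cd` of the support cannot have three of the four
cross pairs non-adjacent: all further vertices would be adjacent to exactly `a` and `c`, so the two
forms would change equally when weight moves between the non-adjacent vertices `a` and `c`. -/
theorem no_disjoint_aux1 (h : Extremal G m E T x) {a b c d : V} (ha : x a ≠ 0) (hb : x b ≠ 0)
    (hc : x c ≠ 0) (hd : x d ≠ 0) (hab : h.nt.Adj a b) (hcd : h.nt.Adj c d)
    (hac : a ≠ c) (had : a ≠ d) (hbc : b ≠ c) (hbd : b ≠ d)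
    (nca : ¬ G.Adj c a) (ncb : ¬ G.Adj c b) (nda : ¬ G.Adj d a) : False := by
  have triple := fun (u v w : V) hu hv hw => h.no_triple (u := u) (v := v) (w := w) hu hv hw
  have nab := fun w hw => hab.2 w (show w ∈ Function.support x from hw)
  have ncd := fun w hw => hcd.2 w (show w ∈ Function.support x from hw)
  have gab := hab.1
  have gcd := hcd.1
  have other : ∀ w, x w ≠ 0 → w ≠ a → w ≠ b → w ≠ c → w ≠ d →
      G.Adj a w ∧ ¬ G.Adj b w ∧ G.Adj c w ∧ ¬ G.Adj d w := by
    intro w hw h1 h2 h3 h4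
    have t1 := triple w a c hw ha hc h1 h3 hac
    have t2 := triple w a d hw ha hd h1 h4 had
    have t3 := triple w b c hw hb hc h2 h3 hbc
    have p1 := nab w hw
    have p2 := ncd w hw
    simp only [G.adj_comm w, G.adj_comm a c, G.adj_comm a d, G.adj_comm b c] at *
    tauto
  have heq := h.sub_eq_of_support (u := a) (v := c) (fun w hw => by
    by_cases h1 : w = a
    · subst h1
      rw [adjInd_self, adjInd_self, adjInd_of_not nca, adjInd_of_not (h.not_nt nca)]
    by_cases h3 : w = c
    · subst h3
      have nca' : ¬ G.Adj a w := fun hh => nca hh.symm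
      rw [adjInd_self, adjInd_self, adjInd_of_not nca', adjInd_of_not (h.not_nt nca')]
    by_cases h2 : w = b
    · subst h2
      rw [adjInd_of hab.1, adjInd_of hab, adjInd_of_not ncb, adjInd_of_not (h.not_nt ncb)]
    by_cases h4 : w = d
    · subst h4
      have nda' : ¬ G.Adj a w := fun hh => nda hh.symm
      rw [adjInd_of hcd.1, adjInd_of hcd, adjInd_of_not nda', adjInd_of_not (h.not_nt nda')]
    obtain ⟨q1, q2, q3, q4⟩ := other w hw h1 h2 h3 h4
    rw [adjInd_of q1, adjInd_of q3]
    have hiff : h.nt.Adj a w ↔ h.nt.Adj c w := by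
      constructor
      · rintro ⟨-, hz⟩
        refine ⟨q3, fun z hzS hzz => ?_⟩
        by_cases z1 : z = a
        · subst z1; exact nca hzz.1
        by_cases z2 : z = b
        · subst z2; exact ncb hzz.1
        by_cases z3 : z = c
        · subst z3; exact hzz.1.ne rfl
        by_cases z4 : z = d
        · subst z4; exact q4 hzz.2.symm
        exact hz z hzS ⟨(other z hzS z1 z2 z3 z4).1, hzz.2⟩
      · rintro ⟨-, hz⟩
        refine ⟨q1, fun z hzS hzz => ?_⟩
        by_cases z1 : z = a
        · subst z1; exact hzz.1.ne rfl
        by_cases z2 : z = b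
        · subst z2; exact q2 hzz.2.symm
        by_cases z3 : z = c
        · subst z3; exact nca hzz.1.symm
        by_cases z4 : z = d
        · subst z4; exact nda hzz.1.symm
        exact hz z hzS ⟨(other z hzS z1 z2 z3 z4).2.2.1, hzz.2⟩
    simp only [adjInd, hiff, sub_self])
  rcases le_total (nbrWeight h.nt x a) (nbrWeight h.nt x c) with h1 | h1
  · exact h.no_pair hc ha hac.symm nca (by linarith) h1
  · exact h.no_pair ha hc hac (fun hh => nca hh.symm) (by linarith) h1

theorem no_disjoint_aux2 (h : Extremal G m E T x) {a b c d : V} (ha : x a ≠ 0) (hb : x b ≠ 0)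
    (hc : x c ≠ 0) (hd : x d ≠ 0) (hab : h.nt.Adj a b) (hcd : h.nt.Adj c d)
    (hac : a ≠ c) (had : a ≠ d) (hbc : b ≠ c) (hbd : b ≠ d)
    (nca : ¬ G.Adj c a) (ncb : ¬ G.Adj c b) : False := by
  by_cases nda : G.Adj d a
  · have ndb : ¬ G.Adj d b := fun hh => hab.2 d hd ⟨nda.symm, hh.symm⟩
    exact h.no_disjoint_aux1 hb ha hc hd hab.symm hcd hbc hbd hac had ncb nca ndb
  · exact h.no_disjoint_aux1 ha hb hc hd hab hcd hac had hbc hbd nca ncb nda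

/-- Two disjoint non-triangular edges `ab` and `cd` with `ac` and `bd` edges cannot lie in the
support. Every vertex of the support is adjacent to exactly one of `a, b` and to exactly one of
`c, d`, so along `e_a + e_b - e_c - e_d` the form of `G` is constant, while that of the
non-triangular edges is convex. -/
theorem no_square (h : Extremal G m E T x) {a b c d : V} (ha : x a ≠ 0) (hb : x b ≠ 0)
    (hc : x c ≠ 0) (hd : x d ≠ 0) (hab : h.nt.Adj a b) (hcd : h.nt.Adj c d)
    (hac : a ≠ c) (had : a ≠ d) (hbc : b ≠ c) (gac : G.Adj a c) (gbd : G.Adj b d) : False := by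
  have nad : ¬ G.Adj a d := fun hh => hab.2 d hd ⟨hh, gbd⟩
  have nbc : ¬ G.Adj b c := fun hh => hab.2 c hc ⟨gac, hh⟩
  have gab := hab.1
  have gcd := hcd.1
  have cover1 : ∀ w, x w ≠ 0 → adjInd G a w + adjInd G b w = 1 := by
    intro w hw
    by_cases h1 : G.Adj a w
    · have h2 : ¬ G.Adj b w := fun hh => hab.2 w hw ⟨h1, hh⟩
      rw [adjInd_of h1, adjInd_of_not h2, add_zero]
    · by_cases h2 : G.Adj b w
      · rw [adjInd_of h2, adjInd_of_not h1, zero_add]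
      · exfalso
        have w1 : a ≠ w := by rintro rfl; exact h2 gab.symm
        have w2 : b ≠ w := by rintro rfl; exact h1 gab
        have w3 : d ≠ w := by rintro rfl; exact h2 gbd
        have w4 : c ≠ w := by rintro rfl; exact h1 gac
        have t1 := h.no_triple ha hd hw had w1 w3 nad h1
        have t2 := h.no_triple hb hc hw hbc w2 w4 nbc h2
        exact hcd.2 w hw ⟨not_not.1 t2, not_not.1 t1⟩
  have cover2 : ∀ w, x w ≠ 0 → adjInd G c w + adjInd G d w = 1 := by
    intro w hw
    by_cases h1 : G.Adj c w
    · have h2 : ¬ G.Adj d w := fun hh => hcd.2 w hw ⟨h1, hh⟩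
      rw [adjInd_of h1, adjInd_of_not h2, add_zero]
    · by_cases h2 : G.Adj d w
      · rw [adjInd_of h2, adjInd_of_not h1, zero_add]
      · exfalso
        have w1 : a ≠ w := by rintro rfl; exact h1 gac.symm
        have w2 : b ≠ w := by rintro rfl; exact h2 gbd.symm
        have w3 : d ≠ w := by rintro rfl; exact h1 gcd
        have w4 : c ≠ w := by rintro rfl; exact h2 gcd.symm
        have t1 := h.no_triple ha hd hw had w1 w3 nad
        have t2 := h.no_triple hb hc hw hbc w2 w4 nbc
        exact hab.2 w hw ⟨by tauto, by tauto⟩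
  have hlin : nbrWeight G x a + nbrWeight G x b = nbrWeight G x c + nbrWeight G x d := by
    simp only [nbrWeight_eq_sum, ← Finset.sum_add_distrib, ← mul_add]
    refine Finset.sum_congr rfl fun w _ => ?_
    by_cases h0 : x w = 0
    · simp [h0]
    · rw [cover1 w h0, cover2 w h0]
  have key : ∀ s : ℝ, s ^ 2 = 1 → 0 ≤ s * (nbrWeight h.nt x a + nbrWeight h.nt x b
      - nbrWeight h.nt x c - nbrWeight h.nt x d) → False := by
    intro s hs hN
    have hs0 : s ≠ 0 := by rintro rfl; norm_num at hs
    refine h.no_comb ha hb hc hd s s (-s) (-s) (by ring) ⟨a, ?_⟩ ?_ ?_ ?_ ?_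
    · simp [comb, hac, had, gab.ne, hs0]
    · apply le_of_eq; linear_combination -s * hlin
    · rw [edgeForm_comb4, adjInd_of gab, adjInd_of gac, adjInd_of gbd, adjInd_of gcd,
        adjInd_of_not nad, adjInd_of_not nbc]
      apply le_of_eq; ring
    · linarith
    · rw [edgeForm_comb4, adjInd_of hab, adjInd_of hcd,
        adjInd_of_not (h.not_nt nad), adjInd_of_not (h.not_nt nbc)]
      have := adjInd_le_one h.nt a c
      have := adjInd_le_one h.nt b d
      nlinarith
  rcases le_total 0 (nbrWeight h.nt x a + nbrWeight h.nt x b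
      - nbrWeight h.nt x c - nbrWeight h.nt x d) with h1 | h1
  · exact key 1 (by norm_num) (by linarith)
  · exact key (-1) (by norm_num) (by linarith)

theorem no_disjoint (h : Extremal G m E T x) {a b c d : V} (ha : x a ≠ 0) (hb : x b ≠ 0)
    (hc : x c ≠ 0) (hd : x d ≠ 0) (hab : h.nt.Adj a b) (hcd : h.nt.Adj c d)
    (hac : a ≠ c) (had : a ≠ d) (hbc : b ≠ c) (hbd : b ≠ d) : False := by
  have h1 := h.no_disjoint_aux2 ha hb hc hd hab hcd hac had hbc hbd
  have h2 := h.no_disjoint_aux2 ha hb hd hc hab hcd.symm had hac hbd hbc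
  have p := hcd.2 a ha
  have q := hcd.2 b hb
  by_cases gca : G.Adj c a
  · have gdb : G.Adj d b := by tauto
    exact h.no_square ha hb hc hd hab hcd hac had hbc gca.symm gdb.symm
  · have gcb : G.Adj c b := by tauto
    have gda : G.Adj d a := by tauto
    exact h.no_square ha hb hd hc hab hcd.symm had hac hbd gda.symm gcb.symm

/-- No two non-triangular edges `va` and `vb` of the support share a vertex: `a` and `b` would be
non-adjacent, and `v` would be the only non-triangular neighbour of each. -/
theorem no_path (h : Extremal G m E T x) {a v b : V} (ha : x a ≠ 0) (hv : x v ≠ 0) (hb : x b ≠ 0)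
    (hab : a ≠ b) (hva : h.nt.Adj v a) (hvb : h.nt.Adj v b) : False := by
  have nab : ¬ G.Adj a b := fun hh => hva.2 b hb ⟨hvb.1, hh⟩
  have single : ∀ p q, x p ≠ 0 → x q ≠ 0 → p ≠ q → ¬ G.Adj p q → h.nt.Adj v p → h.nt.Adj v q →
      nbrWeight h.nt x p = x v := by
    intro p q hp hq hpq npq hvp hvq
    rw [nbrWeight_eq_sum, Finset.sum_eq_single v]
    · rw [adjInd_of hvp.symm, mul_one]
    · intro w _ hwv
      by_cases h0 : x w = 0
      · simp [h0]
      by_cases hpw : h.nt.Adj p w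
      · exfalso
        have hwq : w ≠ q := by rintro rfl; exact npq hpw.1
        exact h.no_disjoint hp h0 hv hq hpw hvq hvp.1.ne' hpq hwv hwq
      · rw [adjInd_of_not hpw, mul_zero]
    · simp
  have ea := single a b ha hb hab nab hva hvb
  have eb := single b a hb ha hab.symm (fun hh => nab hh.symm) hvb hva
  rcases le_total (nbrWeight G x a) (nbrWeight G x b) with h1 | h1
  · exact h.no_pair hb ha hab.symm (fun hh => nab hh.symm) h1 (by linarith)
  · exact h.no_pair ha hb hab nab h1 (by linarith)

/-- At most one non-triangular edge lies in the support. -/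
theorem unique_edge (h : Extremal G m E T x) {u v a b : V} (hu : x u ≠ 0) (hv : x v ≠ 0)
    (ha : x a ≠ 0) (hb : x b ≠ 0) (huv : h.nt.Adj u v) (hab : h.nt.Adj a b) :
    (a = u ∧ b = v) ∨ (a = v ∧ b = u) := by
  by_cases h1 : u = a
  · subst h1
    by_cases h2 : b = v
    · exact Or.inl ⟨rfl, h2⟩
    · exact (h.no_path hb hu hv h2 hab huv).elim
  by_cases h2 : v = a
  · subst h2
    by_cases h3 : b = u
    · exact Or.inr ⟨rfl, h3⟩
    · exact (h.no_path hb hv hu h3 hab huv.symm).elim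
  by_cases h3 : u = b
  · subst h3
    exact (h.no_path hv hu ha h2 huv hab.symm).elim
  by_cases h4 : v = b
  · subst h4
    exact (h.no_path hu hv ha h1 huv.symm hab.symm).elim
  exact (h.no_disjoint hu hv ha hb huv hab h1 h3 h2 h4).elim

end Extremal

/-! ### The continuous bound -/

/-- If `u` and `v` have no common neighbour in the support and `x v ≤ x u`, the remaining weight
contributes at most what it would as a clique completely joined to `u`. -/
theorem edgeForm_le_of_edge (G : SimpleGraph V) {x : V → ℝ} (hx : ∀ v, 0 ≤ x v) {u v : V}
    (huv : u ≠ v) (hcom : ∀ w, x w ≠ 0 → ¬ (G.Adj u w ∧ G.Adj v w)) (hle : x v ≤ x u) {m : ℝ}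
    (hm : ∑ w, x w = m) :
    edgeForm G x ≤ 2 * (x u * x v) + 2 * ((m - x u - x v) * x u) + (m - x u - x v) ^ 2 := by
  have split : ∀ g : V → ℝ, ∑ w, g w = g u + g v + ∑ w ∈ (Finset.univ.erase u).erase v, g w := by
    intro g
    rw [← Finset.add_sum_erase _ g (Finset.mem_univ u),
      ← Finset.add_sum_erase (Finset.univ.erase u) g (a := v) (by simp [huv.symm])]
    ring
  set R := (Finset.univ.erase u).erase v with hR
  have hmR : ∑ w ∈ R, x w = m - x u - x v := by have := split x; linarith
  set r := m - x u - x v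
  have hr : 0 ≤ r := hmR ▸ Finset.sum_nonneg fun w _ => hx w
  set α := ∑ w ∈ R, x w * adjInd G u w with hα
  set β := ∑ w ∈ R, x w * adjInd G v w with hβ
  have hαβ : α + β ≤ r := by
    rw [hα, hβ, ← hmR, ← Finset.sum_add_distrib]
    refine Finset.sum_le_sum fun w _ => ?_
    by_cases h0 : x w = 0
    · simp [h0]
    have h1 : adjInd G u w + adjInd G v w ≤ 1 := by
      have := hcom w h0
      unfold adjInd
      split_ifs <;> first | tauto | norm_num
    nlinarith [hx w]
  have hα0 : 0 ≤ α := Finset.sum_nonneg fun w _ => mul_nonneg (hx w) (adjInd_nonneg _ _ _)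
  have hβ0 : 0 ≤ β := Finset.sum_nonneg fun w _ => mul_nonneg (hx w) (adjInd_nonneg _ _ _)
  have fu : nbrWeight G x u ≤ x v + α := by
    rw [nbrWeight_eq_sum, split, adjInd_self]
    nlinarith [hx v, adjInd_le_one G u v]
  have fv : nbrWeight G x v ≤ x u + β := by
    rw [nbrWeight_eq_sum, split, adjInd_self]
    nlinarith [hx u, adjInd_le_one G v u]
  have fR : ∑ w ∈ R, x w * nbrWeight G x w ≤ x u * α + x v * β + r ^ 2 := by
    have : ∀ w ∈ R, x w * nbrWeight G x w ≤
        x u * (x w * adjInd G u w) + x v * (x w * adjInd G v w) + x w * r := by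
      intro w _
      have h1 : nbrWeight G x w ≤ x u * adjInd G u w + x v * adjInd G v w + r := by
        rw [nbrWeight_eq_sum, split, adjInd_comm G u w, adjInd_comm G v w, ← hmR]
        gcongr with z _
        nlinarith [hx z, adjInd_le_one G w z]
      nlinarith [mul_le_mul_of_nonneg_left h1 (hx w)]
    refine (Finset.sum_le_sum this).trans (le_of_eq ?_)
    rw [Finset.sum_add_distrib, Finset.sum_add_distrib, ← Finset.mul_sum, ← Finset.mul_sum,
      ← Finset.sum_mul, hmR]
    ring
  unfold edgeForm
  rw [split]
  have e1 := mul_le_mul_of_nonneg_left fu (hx u)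
  have e2 := mul_le_mul_of_nonneg_left fv (hx v)
  have e3 := mul_le_mul_of_nonneg_right hle hβ0
  have e4 := mul_le_mul_of_nonneg_left hαβ (hx u)
  nlinarith

/-- The continuous form of the lower bound, with real parts `a`, `b`, `c`. -/
theorem exists_real_parts {G : SimpleGraph V} {m E T : ℝ} {x : V → ℝ}
    (hx : Feasible G m E T x) : ∃ a b c : ℝ, 0 ≤ a ∧ 0 ≤ b ∧ 0 ≤ c ∧ a + b + c = m ∧
      E ≤ a ^ 2 + 2 * (a * b) + 2 * (b * c) ∧ T ≤ 2 * (b * c) := by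
  obtain ⟨y, hy⟩ := exists_extremal hx
  have hm : 0 ≤ m := hy.total ▸ Finset.sum_nonneg fun w _ => hy.nonneg w
  by_cases hex : ∃ u v, y u ≠ 0 ∧ y v ≠ 0 ∧ hy.nt.Adj u v
  · obtain ⟨u, v, hu, hv, huv, hle⟩ : ∃ u v, y u ≠ 0 ∧ y v ≠ 0 ∧ hy.nt.Adj u v ∧ y v ≤ y u := by
      obtain ⟨u, v, hu, hv, huv⟩ := hex
      rcases le_total (y v) (y u) with h1 | h1
      · exact ⟨u, v, hu, hv, huv, h1⟩
      · exact ⟨v, u, hv, hu, huv.symm, h1⟩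
    have hne := huv.1.ne
    refine ⟨m - y u - y v, y u, y v, ?_, hy.nonneg u, hy.nonneg v, by ring, ?_, ?_⟩
    · have := Finset.sum_le_sum_of_subset_of_nonneg (Finset.subset_univ {u, v})
        (f := y) (fun w _ _ => hy.nonneg w)
      rw [Finset.sum_pair hne, hy.total] at this
      linarith
    · have := edgeForm_le_of_edge G hy.nonneg hne (fun w hw => huv.2 w hw) hle hy.total
      linarith [hy.edges]
    · refine hy.nontri.trans (le_of_eq ?_)
      have wt : ∀ p q, y p ≠ 0 → y q ≠ 0 → hy.nt.Adj p q → nbrWeight hy.nt y p = y q := by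
        intro p q hp hq hpq
        rw [nbrWeight_eq_sum, Finset.sum_eq_single q]
        · rw [adjInd_of hpq, mul_one]
        · intro w _ hwq
          by_cases h0 : y w = 0
          · simp [h0]
          rw [adjInd_of_not, mul_zero]
          intro hpw
          rcases hy.unique_edge hp hq hp h0 hpq hpw with h1 | h1
          · exact hwq h1.2
          · exact hpq.ne h1.1
        · simp
      have hsum : ∑ w ∈ {u, v}, y w * nbrWeight hy.nt y w = edgeForm hy.nt y := by
        refine Finset.sum_subset (Finset.subset_univ _) fun w _ hw => ?_
        by_cases h0 : y w = 0
        · simp [h0]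
        rw [nbrWeight_eq_sum, Finset.sum_eq_zero, mul_zero]
        intro z _
        by_cases h1 : y z = 0
        · simp [h1]
        rw [adjInd_of_not, mul_zero]
        intro hwz
        rcases hy.unique_edge hu hv h0 h1 huv hwz with h2 | h2 <;> simp [h2.1] at hw
      rw [← hsum, Finset.sum_pair hne, wt u v hu hv huv, wt v u hv hu huv.symm]
      ring
  · push Not at hex
    refine ⟨m, 0, 0, hm, le_rfl, le_rfl, by ring, ?_, ?_⟩
    · refine hy.edges.trans ?_
      have : edgeForm G y ≤ ∑ u, y u * ∑ v, y v := by
        unfold edgeForm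
        refine Finset.sum_le_sum fun u _ => mul_le_mul_of_nonneg_left ?_ (hy.nonneg u)
        rw [nbrWeight_eq_sum]
        exact Finset.sum_le_sum fun v _ => mul_le_of_le_one_right (hy.nonneg v) (adjInd_le_one _ _ _)
      rw [← Finset.sum_mul, hy.total] at this
      linarith
    · refine hy.nontri.trans (le_of_eq ?_)
      unfold edgeForm
      simp only [mul_zero]
      refine Finset.sum_eq_zero fun u _ => ?_
      by_cases h0 : y u = 0
      · simp [h0]
      rw [nbrWeight_eq_sum, Finset.sum_eq_zero, mul_zero]
      intro v _
      by_cases h1 : y v = 0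
      · simp [h1]
      · rw [adjInd_of_not (hex u v h0 h1), mul_zero]

end Symm

/-! ### Rounding to integers -/

section Rounding

/-- Rounding `a` to `⌈a⌉ + 1` and `b` to `⌈b⌉` lowers `c` by less than `3`, so that `b * c` drops by
at most `3 * b ≤ 3 / 2 * n`. The hypothesis `n ^ 2 / 4 < e` is what forces `a > 0`. -/
theorem exists_nat_parts_of_le {n e : ℕ} (he1 : (n : ℝ) ^ 2 / 4 < e) (he2 : e ≤ n * (n - 1) / 2)
    {a b c : ℝ} (ha : 0 ≤ a) (hb : 0 ≤ b) (hc : 0 ≤ c) (hsum : a + b + c = n) (hbn : b ≤ n / 2)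
    (hE : 2 * (e : ℝ) ≤ a ^ 2 + 2 * (a * b) + 2 * (b * c)) :
    ∃ a' b' c' : ℕ, a' + b' + c' = n ∧ e ≤ a' * (a' - 1) / 2 + a' * b' + b' * c' ∧
      b * c - 3 / 2 * n ≤ (b' : ℝ) * c' := by
  have hc' : c = n - a - b := by linarith
  have hE' : 2 * (e : ℝ) ≤ a ^ 2 + 2 * (b * (n - b)) := by rw [hc'] at hE; nlinarith
  have ha0 : 0 < a := by
    rcases ha.lt_or_eq with h | h
    · exact h
    · subst h; nlinarith [sq_nonneg ((n : ℝ) - 2 * b)]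
  have hk1 : 1 ≤ ⌈a⌉₊ := Nat.one_le_ceil_iff.2 ha0
  have hka : a ≤ (⌈a⌉₊ : ℝ) := Nat.le_ceil a
  have hka' : (⌈a⌉₊ : ℝ) < a + 1 := Nat.ceil_lt_add_one ha
  have hlb : b ≤ (⌈b⌉₊ : ℝ) := Nat.le_ceil b
  have hlb' : (⌈b⌉₊ : ℝ) < b + 1 := Nat.ceil_lt_add_one hb
  generalize ⌈a⌉₊ = k at *
  generalize ⌈b⌉₊ = l at *
  by_cases hn : k + 1 + l ≤ n
  · obtain ⟨c', rfl⟩ := Nat.exists_eq_add_of_le hn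
    refine ⟨k + 1, l, c', rfl, ?_, ?_⟩
    · have hdiv : 2 * ((k + 1) * (k + 1 - 1) / 2) = k * (k + 1) := by
        rw [Nat.add_sub_cancel, mul_comm (k + 1) k]
        exact Nat.two_mul_div_two_of_even (Nat.even_mul_succ_self k)
      -- `⌈b⌉` is at most `n / 2`, or equal to `(n + 1) / 2`, which costs at most `1 / 4`.
      have hquarter : b * ((k + 1 + l + c' : ℕ) - b) ≤ (l : ℝ) * (k + 1 + c') + 1 / 4 := by
        push_cast at hbn ⊢
        rcases le_or_gt l (k + 1 + c') with h | h
        · have h' : (l : ℝ) ≤ k + 1 + c' := by exact_mod_cast h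
          nlinarith
        · have h1 : l ≤ k + 1 + c' + 1 := by
            have : (l : ℝ) < k + 1 + c' + 2 := by linarith
            have : l < k + 1 + c' + 2 := by exact_mod_cast this
            omega
          have h2 : (l : ℝ) = k + 1 + c' + 1 := by
            have : l = k + 1 + c' + 1 := by omega
            exact_mod_cast this
          nlinarith [sq_nonneg ((k : ℝ) + 1 + l + c' - 2 * b)]
      have hk1' : (1 : ℝ) ≤ k := by exact_mod_cast hk1
      have hfin : 2 * (e : ℝ) ≤ k * (k + 1) + 2 * (((k + 1) * l + l * c' : ℕ) : ℝ) := by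
        push_cast at hE' hquarter ⊢
        nlinarith
      have : 2 * e ≤ k * (k + 1) + 2 * ((k + 1) * l + l * c') := by exact_mod_cast hfin
      omega
    · have hcc : c ≤ c' + 3 := by push_cast at hsum; linarith
      have hc0 : (0 : ℝ) ≤ c' := Nat.cast_nonneg _
      nlinarith [mul_le_mul_of_nonneg_left hcc hb, mul_le_mul_of_nonneg_right hlb hc0]
  · refine ⟨n, 0, 0, by simp, by simpa using he2, ?_⟩
    have h1 : (n : ℝ) + 1 ≤ k + 1 + l := by
      have : n + 1 ≤ k + 1 + l := by omega
      exact_mod_cast this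
    have hc2 : c ≤ 2 := by linarith
    have := mul_le_mul_of_nonneg_left hc2 hb
    simp only [Nat.cast_zero, mul_zero]
    linarith

/-- Rounding without the assumption `b ≤ n / 2`: replacing a larger `b` by `n / 2` only increases
both counts. -/
theorem exists_nat_parts {n e : ℕ} (he1 : (n : ℝ) ^ 2 / 4 < e) (he2 : e ≤ n * (n - 1) / 2)
    {a b c : ℝ} (ha : 0 ≤ a) (hb : 0 ≤ b) (hc : 0 ≤ c) (hsum : a + b + c = n)
    (hE : 2 * (e : ℝ) ≤ a ^ 2 + 2 * (a * b) + 2 * (b * c)) :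
    ∃ a' b' c' : ℕ, a' + b' + c' = n ∧ e ≤ a' * (a' - 1) / 2 + a' * b' + b' * c' ∧
      b * c - 3 / 2 * n ≤ (b' : ℝ) * c' := by
  rcases le_total b (n / 2) with h | h
  · exact exists_nat_parts_of_le he1 he2 ha hb hc hsum h hE
  · have hc' : c = n - a - b := by linarith
    obtain ⟨a', b', c', h1, h2, h3⟩ := exists_nat_parts_of_le he1 he2 (a := a) (b := n / 2)
      (c := n / 2 - a) ha (by positivity) (by linarith) (by ring) le_rfl (by
        rw [hc'] at hE; nlinarith [sq_nonneg ((n : ℝ) - 2 * b)])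
    refine ⟨a', b', c', h1, h2, le_trans ?_ h3⟩
    rw [hc']
    nlinarith [sq_nonneg ((n : ℝ) - 2 * b), mul_nonneg ha (sub_nonneg.2 h)]

end Rounding

/-! ### From graphs to weightings -/

section Counting

theorem edgeForm_one {V : Type*} [Fintype V] (H : SimpleGraph V) :
    edgeForm H (fun _ => 1) = 2 * (H.edgeSet.ncard : ℝ) := by
  have h1 : ∀ u, nbrWeight H (fun _ => 1) u = H.degree u := by
    intro u
    simp [nbrWeight, ← SimpleGraph.card_neighborFinset_eq_degree,
      SimpleGraph.neighborFinset_eq_filter]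
  have h2 : H.edgeSet.ncard = H.edgeFinset.card := by
    rw [Set.ncard_eq_toFinset_card', SimpleGraph.edgeFinset]
  rw [h2]
  simp only [edgeForm, h1, one_mul]
  exact_mod_cast H.sum_degrees_eq_twice_card_edges

theorem edgeSet_nonTri_univ {n : ℕ} (G : SimpleGraph (Fin n)) :
    (nonTri G Set.univ).edgeSet = G.edgeSet \ {e ∈ G.edgeSet | triangularEdge G e} := by
  ext e
  induction e using Sym2.ind with
  | _ u v =>
    simp only [SimpleGraph.mem_edgeSet, Set.mem_sdiff, Set.mem_ofPred_eq, not_and, nonTri,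
      triangularEdge]
    constructor
    · rintro ⟨h1, h2⟩
      refine ⟨h1, fun _ => ?_⟩
      rintro ⟨p, q, hpq, -, w, hw1, hw2⟩
      rcases Sym2.eq_iff.1 hpq with ⟨rfl, rfl⟩ | ⟨rfl, rfl⟩
      · exact h2 w trivial hw1 hw2
      · exact h2 w trivial hw2 hw1
    · rintro ⟨h1, h2⟩
      exact ⟨h1, fun w _ hw1 hw2 => h2 h1 ⟨u, v, rfl, h1, w, hw1, hw2⟩⟩

theorem exists_parts_of_graph {n e : ℕ} (he1 : (n : ℝ) ^ 2 / 4 < e) (he2 : e ≤ n * (n - 1) / 2)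
    (G : SimpleGraph (Fin n)) (hG : G.edgeSet.ncard = e) :
    ∃ a b c : ℕ, a + b + c = n ∧ e ≤ a * (a - 1) / 2 + a * b + b * c ∧
      (e : ℝ) - b * c - 3 / 2 * n ≤ trCount G := by
  have hcount : (nonTri G Set.univ).edgeSet.ncard + trCount G = e := by
    rw [edgeSet_nonTri_univ, ← hG]
    exact Set.ncard_sdiff_add_ncard_of_subset (Set.sep_subset _ _) (Set.toFinite _)
  have hsupp : Function.support (fun _ : Fin n => (1 : ℝ)) = Set.univ := by ext; simp
  have hfe : Feasible G n (2 * (e : ℝ)) (2 * ((nonTri G Set.univ).edgeSet.ncard : ℝ))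
      (fun _ => 1) := by
    refine ⟨fun _ => zero_le_one, by simp, ?_, ?_⟩
    · rw [edgeForm_one, hG]
    · rw [hsupp, edgeForm_one]
  obtain ⟨a, b, c, ha, hb, hc, hsum, hE, hT⟩ := exists_real_parts hfe
  obtain ⟨a', b', c', h1, h2, h3⟩ := exists_nat_parts he1 he2 ha hb hc hsum hE
  refine ⟨a', b', c', h1, h2, ?_⟩
  have : ((nonTri G Set.univ).edgeSet.ncard : ℝ) + trCount G = e := by exact_mod_cast hcount
  linarith

end Counting

/-! ### The extremal construction -/

section Construction

/-- The complete graph on the first part, joined completely to the second part, which is joined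
completely to the third. -/
def partGraph (a b c : ℕ) : SimpleGraph (Fin a ⊕ Fin b ⊕ Fin c) where
  Adj
    | .inl i, .inl j => i ≠ j
    | .inl _, .inr (.inl _) => True
    | .inr (.inl _), .inl _ => True
    | .inr (.inl _), .inr (.inr _) => True
    | .inr (.inr _), .inr (.inl _) => True
    | _, _ => False
  symm := ⟨by rintro (i | i | i) (j | j | j) <;> simp [eq_comm]⟩
  loopless := ⟨by rintro (i | i | i) <;> simp⟩

/-- The complete bipartite graph between the second and the third part. -/
def bipGraph (a b c : ℕ) : SimpleGraph (Fin a ⊕ Fin b ⊕ Fin c) where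
  Adj
    | .inr (.inl _), .inr (.inr _) => True
    | .inr (.inr _), .inr (.inl _) => True
    | _, _ => False
  symm := ⟨by rintro (i | i | i) (j | j | j) <;> simp⟩
  loopless := ⟨by rintro (i | i | i) <;> simp⟩

theorem bipGraph_le (a b c : ℕ) : bipGraph a b c ≤ partGraph a b c := by
  rintro (i | i | i) (j | j | j) <;> simp [bipGraph, partGraph]

theorem bipGraph_no_common {a b c : ℕ} {u v : Fin a ⊕ Fin b ⊕ Fin c}
    (h : (bipGraph a b c).Adj u v) (w) :
    ¬ ((partGraph a b c).Adj u w ∧ (partGraph a b c).Adj v w) := by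
  rcases u with u | u | u <;> rcases v with v | v | v <;> rcases w with w | w | w <;>
    simp_all [bipGraph, partGraph]

theorem edgeForm_bipGraph (a b c : ℕ) :
    edgeForm (bipGraph a b c) (fun _ => 1) = 2 * (b * c : ℝ) := by
  simp [edgeForm, nbrWeight, Fintype.sum_sum_type, bipGraph]
  ring

theorem edgeForm_partGraph (a b c : ℕ) :
    edgeForm (partGraph a b c) (fun _ => 1) =
      (a : ℝ) * (a - 1) + 2 * (a * b : ℝ) + 2 * (b * c : ℝ) := by
  have h : ∀ i j : Fin a, adjInd (partGraph a b c) (.inl i) (.inl j) = 1 - if i = j then 1 else 0 := by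
    intro i j
    by_cases hij : i = j <;> simp [adjInd, partGraph, hij]
  simp only [edgeForm, nbrWeight_eq_sum, Fintype.sum_sum_type, h]
  simp [adjInd, partGraph]
  ring

theorem edgeForm_comap {V W : Type*} [Fintype V] [Fintype W] (φ : V ≃ W) (H : SimpleGraph W) :
    edgeForm (H.comap φ) (fun _ => 1) = edgeForm H (fun _ => 1) := by
  unfold edgeForm nbrWeight
  simp only [SimpleGraph.comap_adj, one_mul]
  rw [← φ.sum_comp]
  refine Finset.sum_congr rfl fun u _ => ?_
  rw [← φ.sum_comp]

/-- A subgraph of `partGraph` with `e` edges that contains `bipGraph`; its `b * c` edges in `bipGraph`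
are non-triangular. It exists since `b * c ≤ n ^ 2 / 4 < e`. -/
theorem exists_graph_of_parts {n e a b c : ℕ} (he1 : (n : ℝ) ^ 2 / 4 < e)
    (hsum : a + b + c = n) (he : e ≤ a * (a - 1) / 2 + a * b + b * c) :
    ∃ G : SimpleGraph (Fin n), G.edgeSet.ncard = e ∧ trCount G + b * c ≤ e := by
  obtain ⟨φ⟩ : Nonempty (Fin n ≃ Fin a ⊕ Fin b ⊕ Fin c) :=
    Fintype.card_eq.1 (by simp; omega)
  set H := (partGraph a b c).comap φ with hH
  set K := (bipGraph a b c).comap φ with hK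
  have hKH : K ≤ H := fun u v h => bipGraph_le a b c h
  have hKc : K.edgeSet.ncard = b * c := by
    have h1 := edgeForm_one K
    rw [hK, edgeForm_comap, edgeForm_bipGraph] at h1
    have : ((b * c : ℕ) : ℝ) = (K.edgeSet.ncard : ℝ) := by push_cast; linarith
    exact_mod_cast this.symm
  have hHc : e ≤ H.edgeSet.ncard := by
    have h1 := edgeForm_one H
    rw [hH, edgeForm_comap, edgeForm_partGraph] at h1
    have h2 : ((a * (a - 1) : ℕ) : ℝ) = a * (a - 1) := by
      rcases a with _ | a <;> simp
    rw [← h2] at h1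
    have h3 : a * (a - 1) + 2 * (a * b) + 2 * (b * c) = 2 * H.edgeSet.ncard := by
      exact_mod_cast h1
    have h4 : a * (a - 1) / 2 * 2 ≤ a * (a - 1) := Nat.div_mul_le_self _ _
    omega
  have hbc : b * c ≤ e := by
    have h1 : (b : ℝ) + c ≤ n := by
      have : b + c ≤ n := by omega
      exact_mod_cast this
    have h2 : (b : ℝ) * c ≤ e := by
      have hb : (0 : ℝ) ≤ b := Nat.cast_nonneg _
      have hc : (0 : ℝ) ≤ c := Nat.cast_nonneg _
      nlinarith [sq_nonneg ((b : ℝ) - c)]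
    exact_mod_cast h2
  obtain ⟨X, hKX, hXH, hX⟩ := Set.exists_subsuperset_card_eq
    (SimpleGraph.edgeSet_mono hKH) (hKc ▸ hbc) hHc
  have hXe : (SimpleGraph.fromEdgeSet X).edgeSet = X := by
    rw [SimpleGraph.edgeSet_fromEdgeSet, sdiff_eq_left, Set.disjoint_left]
    exact fun z hz hd => H.not_isDiag_of_mem_edgeSet (hXH hz) hd
  have hle : SimpleGraph.fromEdgeSet X ≤ H := by
    rw [← SimpleGraph.edgeSet_subset_edgeSet, hXe]; exact hXH
  refine ⟨SimpleGraph.fromEdgeSet X, by rw [hXe, hX], ?_⟩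
  have hsub : {z ∈ (SimpleGraph.fromEdgeSet X).edgeSet |
      triangularEdge (SimpleGraph.fromEdgeSet X) z} ⊆ X \ K.edgeSet := by
    rintro z ⟨hz, u, v, rfl, -, w, hw1, hw2⟩
    rw [hXe] at hz
    exact ⟨hz, fun hk => bipGraph_no_common (SimpleGraph.mem_edgeSet _ |>.1 hk) (φ w)
      ⟨hle hw1, hle hw2⟩⟩
  have h1 := Set.ncard_le_ncard hsub (Set.toFinite _)
  have h2 := Set.ncard_sdiff_add_ncard_of_subset hKX (Set.toFinite _)
  unfold trCount
  omega

end Construction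

/-- For all integers `n ≥ 3` and `e` with `n²/4 < e ≤ n(n-1)/2`,
`g(n,e) - (3/2)·n ≤ Tr(n,e) ≤ g(n,e)`. -/
theorem gNum_sub_le_trNum_le_gNum (n e : ℕ) (hn : 3 ≤ n)
    (he1 : (n : ℝ) ^ 2 / 4 < (e : ℝ)) (he2 : e ≤ n * (n - 1) / 2) :
    gNum n e - (3 / 2 : ℝ) * n ≤ (TrNum n e : ℝ) ∧ (TrNum n e : ℝ) ≤ gNum n e := by
  have hne : {m : ℕ | ∃ G : SimpleGraph (Fin n), G.edgeSet.ncard = e ∧ trCount G = m}.Nonempty := by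
    obtain ⟨G, hG, -⟩ := exists_graph_of_parts (a := n) (b := 0) (c := 0) he1 rfl (by simpa using he2)
    exact ⟨_, G, hG, rfl⟩
  constructor
  · obtain ⟨G, hG, hTr⟩ := Nat.sInf_mem hne
    obtain ⟨a, b, c, h1, h2, h3⟩ := exists_parts_of_graph he1 he2 G hG
    have hbdd : BddBelow {x : ℝ | ∃ a b c : ℕ, a + b + c = n ∧
        e ≤ a * (a - 1) / 2 + a * b + b * c ∧ x = (e : ℝ) - (b : ℝ) * (c : ℝ)} := by
      refine ⟨(e : ℝ) - n * n, ?_⟩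
      rintro x ⟨a, b, c, hs, -, rfl⟩
      have : b * c ≤ n * n := Nat.mul_le_mul (by omega) (by omega)
      have : (b : ℝ) * c ≤ n * n := by exact_mod_cast this
      linarith
    have hg : gNum n e ≤ e - (b : ℝ) * c := csInf_le hbdd ⟨a, b, c, h1, h2, rfl⟩
    have : (TrNum n e : ℝ) = trCount G := by rw [hTr, TrNum]
    linarith
  · refine le_csInf ⟨_, n, 0, 0, rfl, by simpa using he2, rfl⟩ ?_
    rintro x ⟨a, b, c, h1, h2, rfl⟩
    obtain ⟨G, hG, hTr⟩ := exists_graph_of_parts he1 h1 h2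
    have h3 : TrNum n e ≤ trCount G := Nat.sInf_le ⟨G, hG, rfl⟩
    have h4 : (TrNum n e : ℝ) + b * c ≤ e := by exact_mod_cast (by omega : TrNum n e + b * c ≤ e)
    linarith
end

section
/- Let d ≥ 1 and let a₁, …, a_d be vectors in ℝ^{d+1}. Then there exists a non-zero vector z ∈ ℝ^{d+1} such that aᵢᵀz ≥ 0 for every 1 ≤ i ≤ d, and the sum of the coordinates of z is 0, i.e., Σ_{1≤i≤d+1} z_i = 0. -/
/-- Given `d ≥ 1` vectors `a₁, …, a_d` in `ℝ^{d+1}`, there is a non-zero vector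
`z ∈ ℝ^{d+1}` with `aᵢᵀz ≥ 0` for all `i` and whose coordinates sum to `0`. -/
theorem exists_nonzero_vector_nonneg_inner_sum_zero
    (d : ℕ) (hd : 1 ≤ d) (a : Fin d → (Fin (d + 1) → ℝ)) :
    ∃ z : Fin (d + 1) → ℝ, z ≠ 0 ∧ (∀ i : Fin d, 0 ≤ ∑ j, a i j * z j) ∧
      ∑ j, z j = 0 := by
  -- The square matrix with rows `(1, …, 1), a₁, …, a_d`. If it is singular, any non-zero
  -- kernel vector works; otherwise take the preimage of `(0, 1, …, 1)`.
  let M : Matrix (Fin (d + 1)) (Fin (d + 1)) ℝ := Matrix.of (Fin.cons (fun _ => 1) a)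
  have h0 (z : Fin (d + 1) → ℝ) : M.mulVec z 0 = ∑ j, z j := by
    simp [M, Matrix.mulVec, dotProduct]
  have hs (z : Fin (d + 1) → ℝ) (i : Fin d) : M.mulVec z i.succ = ∑ j, a i j * z j := by
    simp [M, Matrix.mulVec, dotProduct]
  by_cases hdet : M.det = 0
  · obtain ⟨z, hz, hMz⟩ := Matrix.exists_mulVec_eq_zero_iff.mpr hdet
    exact ⟨z, hz, fun i => by rw [← hs, hMz]; simp, by rw [← h0, hMz]; simp⟩
  · have hu : IsUnit M := (Matrix.isUnit_iff_isUnit_det M).mpr (isUnit_iff_ne_zero.mpr hdet)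
    obtain ⟨z, hz⟩ := Matrix.mulVec_surjective_iff_isUnit.mpr hu (Fin.cons 0 fun _ => 1)
    refine ⟨z, ?_, fun i => by rw [← hs, hz]; simp, by rw [← h0, hz]; simp⟩
    rintro rfl
    -- `d ≥ 1` makes `(0, 1, …, 1)` non-zero.
    have := congrFun hz (Fin.succ ⟨0, hd⟩)
    rw [Matrix.mulVec_zero, Fin.cons_succ] at this
    simp at this
end

section
/- Let G be a simple graph on n vertices v₁, …, vₙ, let G₁, G₂, …, G_d be subgraphs of G on the same vertex set, and let ℓ be an index with 1 ≤ ℓ ≤ d. Then for every x ∈ Sₙ there exist a subset K ⊆ V(G) and a vector y ∈ Sₙ whose support is K such that f(G_ℓ, x) ≤ f(G_ℓ, y), f(Gᵢ, x) = f(Gᵢ, y) for every 1 ≤ i ≤ d with i ≠ ℓ, and the independence number of the induced subgraph G[K] is at most d. -/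
/-!
Among the vectors `y` of the simplex satisfying the required (in)equalities, one of minimal support
works. Indeed, let `S` be a `G`-independent subset of the support of `y` with more than `d`
elements. For `z` supported on `S`, every `t ↦ f(Gᵢ, y + t z)` is affine, since `S` is independent
in each `Gᵢ ≤ G` (`fG_add_smul`). The conditions `Σ z = 0` and, for `i ≠ ℓ`, the vanishing of the slope of
`f(Gᵢ, ·)` along `z` are `d` linear equations in more than `d` unknowns, so they have a nonzero
solution `z`; up to sign the slope for `ℓ` is nonnegative. As `Σ z = 0`, some coordinate of `z` is
negative, so moving from `y` along `z` until a coordinate first vanishes (`exists_boundary_step`)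
stays in the simplex and strictly shrinks the support.
-/

open scoped Classical

/-- `f(G, x) = Σ_{v_i v_j ∈ E(G)} x_i x_j` (each unordered edge counted once). -/
noncomputable def fG {n : ℕ} (G : SimpleGraph (Fin n)) (x : Fin n → ℝ) : ℝ :=
  (∑ i : Fin n, ∑ j : Fin n, if G.Adj i j then x i * x j else 0) / 2

/-- The second-order term of `f(H, y + t z)` in `t` vanishes when `z` is supported on an
`H`-independent set, leaving an affine function of `t`. -/
lemma fG_add_smul {n : ℕ} (H : SimpleGraph (Fin n)) (y z : Fin n → ℝ) (t : ℝ)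
    (hz : ∀ i j, H.Adj i j → z i * z j = 0) :
    fG H (y + t • z) =
      fG H y + t * ∑ j, z j * ∑ k, if H.Adj j k then y k else 0 := by
  have e1 : ∑ i, ∑ j, (if H.Adj i j then (y + t • z) i * (y + t • z) j else 0)
      = ∑ i, ∑ j, (if H.Adj i j then y i * y j else 0)
        + t * ∑ i, ∑ j, (if H.Adj i j then z i * y j else 0)
        + t * ∑ i, ∑ j, (if H.Adj i j then y i * z j else 0) := by
    simp only [Finset.mul_sum, ← Finset.sum_add_distrib]
    refine Finset.sum_congr rfl fun i _ => Finset.sum_congr rfl fun j _ => ?_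
    by_cases h : H.Adj i j
    · simp only [h, if_true, Pi.add_apply, Pi.smul_apply, smul_eq_mul]
      linear_combination t ^ 2 * hz i j h
    · simp [h]
  have e2 : ∑ i, ∑ j, (if H.Adj i j then y i * z j else 0)
      = ∑ i, ∑ j, (if H.Adj i j then z i * y j else 0) := by
    rw [Finset.sum_comm]
    refine Finset.sum_congr rfl fun i _ => Finset.sum_congr rfl fun j _ => ?_
    simp only [H.adj_comm j i, mul_comm]
  have e3 : ∑ j, z j * ∑ k, (if H.Adj j k then y k else 0)
      = ∑ i, ∑ j, (if H.Adj i j then z i * y j else 0) := by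
    simp only [Finset.mul_sum, mul_ite, mul_zero]
  unfold fG
  rw [e1, e2, e3]
  ring

/-- Moving from a point of the simplex along a nonzero direction of total weight `0` that lives on
its support, one reaches a point of the simplex with strictly smaller support. -/
lemma exists_boundary_step {n : ℕ} (y z : Fin n → ℝ) (hy : y ∈ stdSimplex ℝ (Fin n))
    (hzs : ∀ j, z j ≠ 0 → y j ≠ 0) (hsum : ∑ j, z j = 0) (hz : ∃ j, z j ≠ 0) :
    ∃ t : ℝ, 0 ≤ t ∧ y + t • z ∈ stdSimplex ℝ (Fin n) ∧
      Function.support (y + t • z) ⊂ Function.support y := by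
  obtain ⟨j₀, hj₀⟩ : ∃ j, z j < 0 := by
    by_contra! h
    obtain ⟨j, hj⟩ := hz
    exact hj ((Finset.sum_eq_zero_iff_of_nonneg fun i _ => h i).1 hsum j (Finset.mem_univ j))
  obtain ⟨m, hm, hmin⟩ := Finset.exists_min_image (Finset.univ.filter fun j => z j < 0)
    (fun j => y j / (-z j)) ⟨j₀, by simpa using hj₀⟩
  replace hm : z m < 0 := by simpa using hm
  have ht : 0 ≤ y m / (-z m) := div_nonneg (hy.1 m) (by linarith)
  have hm0 : y m + y m / (-z m) * z m = 0 := by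
    have : z m ≠ 0 := hm.ne
    field_simp
    ring
  refine ⟨y m / (-z m), ht, ⟨fun j => ?_, ?_⟩, ?_⟩
  · simp only [Pi.add_apply, Pi.smul_apply, smul_eq_mul]
    rcases lt_or_ge (z j) 0 with hj | hj
    · have h := hmin j (by simpa using hj)
      have h' := (le_div_iff₀ (by linarith : 0 < -z j)).1 h
      linarith
    · exact add_nonneg (hy.1 j) (mul_nonneg ht hj)
  · simp only [Pi.add_apply, Pi.smul_apply, smul_eq_mul, Finset.sum_add_distrib, ← Finset.mul_sum,
      hsum, hy.2, mul_zero, add_zero]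
  · refine Set.ssubset_iff_subset_ne.2 ⟨fun j hj hyj => hj ?_, fun h => ?_⟩
    · have : z j = 0 := by
        by_contra h
        exact hzs j h hyj
      simp [hyj, this]
    · have : m ∈ Function.support y := hzs m hm.ne
      rw [← h] at this
      exact this hm0

/-- If the support of `y` contains a `G`-independent set of more than `d` vertices, the support
can be shrunk while respecting all the conditions on the `f(Gᵢ, ·)`. -/
lemma exists_smaller_support {n d : ℕ} (G : SimpleGraph (Fin n))
    (Gs : Fin d → SimpleGraph (Fin n)) (hsub : ∀ i : Fin d, Gs i ≤ G) (ℓ : Fin d)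
    (y : Fin n → ℝ) (hy : y ∈ stdSimplex ℝ (Fin n)) (S : Finset (Fin n))
    (hS : ↑S ⊆ Function.support y) (hind : ∀ u ∈ S, ∀ v ∈ S, u ≠ v → ¬ G.Adj u v)
    (hcard : d < S.card) :
    ∃ y' : Fin n → ℝ, y' ∈ stdSimplex ℝ (Fin n) ∧
      Function.support y' ⊂ Function.support y ∧ fG (Gs ℓ) y ≤ fG (Gs ℓ) y' ∧
      ∀ i : Fin d, i ≠ ℓ → fG (Gs i) y = fG (Gs i) y' := by
  -- `slope i j` is the partial derivative of `f(Gᵢ, ·)` at `y` in the coordinate `j`.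
  let slope : Fin d → Fin n → ℝ := fun i j => ∑ k, if (Gs i).Adj j k then y k else 0
  -- The `ℓ`-th equation, freed because only an inequality is required there, encodes `Σ z = 0`.
  let v : Fin n → Fin d → ℝ := fun j i => if i = ℓ then 1 else slope i j
  have hdep : ¬ LinearIndepOn ℝ v (S : Set (Fin n)) := by
    intro h
    have := LinearIndependent.fintype_card_le_finrank h
    simp at this
    omega
  obtain ⟨g, hg, j₁, hj₁S, hj₁⟩ := not_linearIndepOn_finset_iff.1 hdep
  obtain ⟨z, hzS, hz0, hzsum, hzslope, hzℓ⟩ : ∃ z : Fin n → ℝ, (∀ j, z j ≠ 0 → j ∈ S) ∧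
      (∃ j, z j ≠ 0) ∧ ∑ j, z j = 0 ∧ (∀ i, i ≠ ℓ → ∑ j, z j * slope i j = 0) ∧
      0 ≤ ∑ j, z j * slope ℓ j := by
    let w : Fin n → ℝ := fun j => if j ∈ S then g j else 0
    have hwS : ∀ j, w j ≠ 0 → j ∈ S := fun j hj => by
      by_contra h
      exact hj (if_neg h)
    have hw0 : w j₁ ≠ 0 := by simpa [w, hj₁S] using hj₁
    have hcoord : ∀ i, ∑ j, w j * v j i = 0 := fun i => by
      have := congrFun hg i
      simpa [w, ite_mul, Finset.sum_ite_mem] using this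
    have hwsum : ∑ j, w j = 0 := by simpa [v] using hcoord ℓ
    have hwslope : ∀ i, i ≠ ℓ → ∑ j, w j * slope i j = 0 := fun i hi => by
      simpa [v, hi] using hcoord i
    rcases le_total 0 (∑ j, w j * slope ℓ j) with h | h
    · exact ⟨w, hwS, ⟨j₁, hw0⟩, hwsum, hwslope, h⟩
    · refine ⟨-w, fun j hj => hwS j (by simpa using hj), ⟨j₁, by simpa using hw0⟩, ?_,
        fun i hi => ?_, ?_⟩
      · simp [hwsum]
      · simp [hwslope i hi]
      · simpa using h
  obtain ⟨t, ht, hmem, hsupp⟩ :=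
    exists_boundary_step y z hy (fun j hj => hS (hzS j hj)) hzsum hz0
  have haff : ∀ i, fG (Gs i) (y + t • z) = fG (Gs i) y + t * ∑ j, z j * slope i j := fun i =>
    fG_add_smul (Gs i) y z t fun a b hab => by
      by_contra h
      exact hind a (hzS a (left_ne_zero_of_mul h)) b (hzS b (right_ne_zero_of_mul h)) hab.ne
        (hsub i hab)
  refine ⟨y + t • z, hmem, hsupp, ?_, fun i hi => ?_⟩
  · rw [haff]
    have := mul_nonneg ht hzℓ
    linarith
  · rw [haff, hzslope i hi, mul_zero, add_zero]

/-- Sharper simultaneous symmetrization: for subgraphs `G₁, …, G_d` of `G`, an index `ℓ`,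
and `x` in the standard simplex, there are `K ⊆ V(G)` and `y` in the simplex with support
`K` such that `f(G_ℓ, x) ≤ f(G_ℓ, y)`, `f(Gᵢ, x) = f(Gᵢ, y)` for all `i ≠ ℓ`, and the
independence number of `G[K]` is at most `d`. -/
theorem symmetrization_multiple_graphs_keeping_equalities
    (n d : ℕ) (G : SimpleGraph (Fin n)) (Gs : Fin d → SimpleGraph (Fin n))
    (hsub : ∀ i : Fin d, Gs i ≤ G) (ℓ : Fin d)
    (x : Fin n → ℝ) (hx : x ∈ stdSimplex ℝ (Fin n)) :
    ∃ (K : Set (Fin n)) (y : Fin n → ℝ),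
      y ∈ stdSimplex ℝ (Fin n) ∧ Function.support y = K ∧
      fG (Gs ℓ) x ≤ fG (Gs ℓ) y ∧
      (∀ i : Fin d, i ≠ ℓ → fG (Gs i) x = fG (Gs i) y) ∧
      ∀ S : Finset (Fin n), ↑S ⊆ K →
        (∀ u ∈ S, ∀ v ∈ S, u ≠ v → ¬ G.Adj u v) → S.card ≤ d := by
  obtain ⟨y, ⟨hy, hle, heq⟩, hmin⟩ := exists_minimalFor_of_wellFoundedLT
    (fun y : Fin n → ℝ => y ∈ stdSimplex ℝ (Fin n) ∧ fG (Gs ℓ) x ≤ fG (Gs ℓ) y ∧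
      ∀ i : Fin d, i ≠ ℓ → fG (Gs i) x = fG (Gs i) y)
    (fun y => Function.support y) ⟨x, hx, le_rfl, fun _ _ => rfl⟩
  refine ⟨Function.support y, y, hy, rfl, hle, heq, fun S hS hind => ?_⟩
  by_contra! hcard
  obtain ⟨y', hy', hss, hle', heq'⟩ := exists_smaller_support G Gs hsub ℓ y hy S hS hind hcard
  exact hss.not_subset
    (hmin ⟨hy', hle.trans hle', fun i hi => (heq i hi).trans (heq' i hi)⟩ hss.subset)
end

section
/- For all integers n ≥ 3 and e with n²/4 < e ≤ n(n−1)/2, we have g(n,e) − (3/2)·n ≤ t(n,e). -/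
/-- `t(n,e) = inf {e - b*c : a,b,c ∈ ℝ≥0, a+b+c = n, a²/2 + ab + bc ≥ e}`. -/
noncomputable def tNum (n e : ℕ) : ℝ :=
  sInf {x : ℝ | ∃ a b c : ℝ, 0 ≤ a ∧ 0 ≤ b ∧ 0 ≤ c ∧ a + b + c = (n : ℝ) ∧
    (e : ℝ) ≤ a ^ 2 / 2 + a * b + b * c ∧ x = (e : ℝ) - b * c}

/-- Clamping `b` to `[(n - a)/2, n/2]` improves the constraint and the objective simultaneously. -/
lemma exists_balanced (n a b c : ℝ) (ha : 0 ≤ a) (hb : 0 ≤ b) (hc : 0 ≤ c) (hs : a + b + c = n) :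
    ∃ b₁ c₁ : ℝ, 0 ≤ c₁ ∧ c₁ ≤ b₁ ∧ b₁ ≤ n / 2 ∧ a + b₁ + c₁ = n ∧
      a * b + b * c ≤ a * b₁ + b₁ * c₁ ∧ b * c ≤ b₁ * c₁ := by
  subst hs
  rcases le_total b c with h | h
  · refine ⟨(b + c) / 2, (b + c) / 2, by linarith, le_rfl, by linarith, by ring, ?_, ?_⟩
    · nlinarith [sq_nonneg (b - c), mul_nonneg ha (sub_nonneg.2 h)]
    · nlinarith [sq_nonneg (b - c)]
  · rcases le_total b (a + c) with hbac | hbac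
    · exact ⟨b, c, hc, h, by linarith, rfl, le_rfl, le_rfl⟩
    · refine ⟨(a + b + c) / 2, (b + c - a) / 2, by linarith, by linarith, le_rfl, by ring, ?_, ?_⟩
      · nlinarith [sq_nonneg (b - a - c)]
      · nlinarith [sq_nonneg (b - a - c), mul_nonneg ha (sub_nonneg.2 hbac)]

/-- Integer rounding of a balanced real triple whose last entry exceeds `3`. -/
lemma exists_rounding (n e : ℕ) (a b c : ℝ) (ha : 0 ≤ a) (hc : 3 < c) (hcb : c ≤ b)
    (hbn : b ≤ n / 2) (hs : a + b + c = n) (he : (e : ℝ) ≤ a ^ 2 / 2 + a * b + b * c) :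
    ∃ a' b' c' : ℕ, a' + b' + c' = n ∧ e ≤ a' * (a' - 1) / 2 + a' * b' + b' * c' ∧
      b * c - 3 / 2 * n ≤ (b' : ℝ) * c' := by
  obtain ⟨p, hp⟩ : ∃ p : ℕ, p = ⌈a⌉₊ := ⟨_, rfl⟩
  obtain ⟨q, hq⟩ : ∃ q : ℕ, q = ⌈b⌉₊ := ⟨_, rfl⟩
  have hp1 : a ≤ p := hp ▸ Nat.le_ceil a
  have hp2 : (p : ℝ) < a + 1 := hp ▸ Nat.ceil_lt_add_one ha
  have hq1 : b ≤ q := hq ▸ Nat.le_ceil b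
  have hq2 : (q : ℝ) < b + 1 := hq ▸ Nat.ceil_lt_add_one (by linarith)
  have hlt : p + 1 + q < n := by
    have : ((p + 1 + q : ℕ) : ℝ) < n := by push_cast; linarith
    exact_mod_cast this
  obtain ⟨r, hr⟩ := Nat.exists_eq_add_of_lt hlt
  have hqn : 2 * q ≤ n + 1 := by
    have : ((2 * q : ℕ) : ℝ) < ((n + 2 : ℕ) : ℝ) := by push_cast; linarith
    have : 2 * q < n + 2 := by exact_mod_cast this
    omega
  have hrR : (n : ℝ) = p + 1 + q + r + 1 := by exact_mod_cast hr
  have hqnR : 2 * (q : ℝ) ≤ n + 1 := by exact_mod_cast hqn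
  -- `b (n - b)` loses at most `1/4`: it grows as long as `q ≤ n/2`, and otherwise `q = (n + 1)/2`.
  have hquad : b * (n - b) - 1 / 4 ≤ q * ((n : ℝ) - q) := by
    rcases le_total (q : ℝ) (n / 2) with h | h
    · nlinarith [mul_nonneg (sub_nonneg.2 hq1) (by linarith : (0 : ℝ) ≤ n - q - b)]
    · nlinarith [sq_nonneg ((n : ℝ) / 2 - b)]
  refine ⟨p + 1, q, r + 1, by omega, ?_, ?_⟩
  · obtain ⟨k, hk⟩ : ∃ k : ℕ, (p + 1) * p = k + k := Nat.even_mul_pred_self (p + 1)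
    have hdiv : (p + 1) * (p + 1 - 1) / 2 = k := by
      rw [Nat.add_sub_cancel, hk]; omega
    rw [hdiv]
    have hkR : ((p : ℝ) + 1) * p = k + k := by exact_mod_cast hk
    have hreal : (e : ℝ) < ((k + (p + 1) * q + q * (r + 1) + 1 : ℕ) : ℝ) := by
      push_cast
      have h1 : a ^ 2 ≤ (p : ℝ) ^ 2 := pow_le_pow_left₀ ha hp1 2
      have h2 : b * (n - b) = a * b + b * c := by rw [← hs]; ring
      have h3 : (q : ℝ) * (n - q) = (p + 1) * q + q * (r + 1) := by rw [hrR]; ring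
      nlinarith
    exact Nat.lt_succ_iff.1 (by exact_mod_cast hreal)
  · push_cast
    have hr' : (r : ℝ) + 1 = c - (p + 1 - a) - (q - b) := by linarith
    rw [hr']
    nlinarith [mul_nonneg (by linarith : (0 : ℝ) ≤ b) (by linarith : (0 : ℝ) ≤ 2 - (p + 1 - a)),
      mul_nonneg (sub_nonneg.2 hq1) (by linarith : (0 : ℝ) ≤ c - (p + 1 - a) - (q - b)),
      mul_nonneg (by linarith : (0 : ℝ) ≤ b) (by linarith : (0 : ℝ) ≤ 1 - (q - b))]

/-- For all integers `n ≥ 3` and `e` with `n²/4 < e ≤ n(n-1)/2`,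
`g(n,e) - (3/2)·n ≤ t(n,e)`. -/
theorem gNum_sub_le_tNum (n e : ℕ) (hn : 3 ≤ n)
    (he1 : (n : ℝ) ^ 2 / 4 < (e : ℝ)) (he2 : e ≤ n * (n - 1) / 2) :
    gNum n e - (3 / 2 : ℝ) * n ≤ tNum n e := by
  have hg : ∀ a b c : ℕ, a + b + c = n → e ≤ a * (a - 1) / 2 + a * b + b * c →
      gNum n e ≤ (e : ℝ) - (b : ℝ) * c := by
    intro a b c hs h
    refine csInf_le ⟨(e : ℝ) - n * n, ?_⟩ ⟨a, b, c, hs, h, rfl⟩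
    rintro x ⟨a, b, c, hs, -, rfl⟩
    have : b * c ≤ n * n := Nat.mul_le_mul (by omega) (by omega)
    have : (b : ℝ) * c ≤ n * n := by exact_mod_cast this
    linarith
  refine le_csInf ?_ ?_
  · refine ⟨e, n, 0, 0, by positivity, le_rfl, le_rfl, by ring, ?_, by ring⟩
    have h : e * 2 ≤ n * n :=
      ((Nat.le_div_iff_mul_le two_pos).1 he2).trans (Nat.mul_le_mul_left n (Nat.sub_le n 1))
    have : (e : ℝ) * 2 ≤ n * n := by exact_mod_cast h
    nlinarith
  · rintro x ⟨a, b, c, ha, hb, hc, hs, he, rfl⟩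
    obtain ⟨b₁, c₁, hc₁, hcb, hbn, hs₁, hf, hm⟩ := exists_balanced n a b c ha hb hc hs
    rcases le_or_gt c₁ 3 with h3 | h3
    · have h0 := hg n 0 0 (by ring) (by simpa using he2)
      have : b₁ * c₁ ≤ n / 2 * 3 := mul_le_mul hbn h3 hc₁ (by positivity)
      norm_num at h0
      linarith
    · obtain ⟨a', b', c', hs', he', hm'⟩ :=
        exists_rounding n e a b₁ c₁ ha h3 hcb hbn hs₁ (by linarith)
      have := hg a' b' c' hs' he'
      linarith
end

section
/- (Motzkin–Straus) Let G be a simple graph on n vertices v₁, …, vₙ and let x ∈ Sₙ. Then there exists y ∈ Sₙ such that f(G, x) ≤ f(G, y) and the support of y induces a complete subgraph of G. -/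
/-!
If two vertices `u ≠ v` of the support of `x` are not adjacent, then `f(G, ·)` is affine along the
direction `e_u - e_v`, because no term `x_u x_v` occurs. Hence moving the whole weight of one of
the two vertices onto the other does not decrease `f` for at least one of the two choices
(`fG_shift`), and this removes a vertex from the support (`exists_smaller_support`). Iterating,
the support becomes a clique.
-/


open scoped Classical

lemma fG_eq_dotProduct {n : ℕ} (G : SimpleGraph (Fin n)) (x : Fin n → ℝ) :
    fG G x = (x ⬝ᵥ (G.adjMatrix ℝ).mulVec x) / 2 := by
  simp only [fG, dotProduct, Matrix.mulVec, SimpleGraph.adjMatrix_apply, Finset.mul_sum]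
  congr 1
  refine Finset.sum_congr rfl fun i _ => Finset.sum_congr rfl fun j _ => ?_
  split_ifs <;> simp

/-- Along `e_u - e_v` with `u`, `v` non-adjacent, `f(G, ·)` is affine, with slope the difference
of the neighbourhood weights of `u` and `v`. -/
lemma fG_shift {n : ℕ} (G : SimpleGraph (Fin n)) (x : Fin n → ℝ) {u v : Fin n}
    (h : ¬ G.Adj u v) (t : ℝ) :
    fG G (x + (Pi.single u t - Pi.single v t)) =
      fG G x + t * ((G.adjMatrix ℝ).mulVec x u - (G.adjMatrix ℝ).mulVec x v) := by
  have h' : ¬ G.Adj v u := fun k => h k.symm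
  have key : ∀ a b : Fin n → ℝ,
      a ⬝ᵥ (G.adjMatrix ℝ).mulVec b = b ⬝ᵥ (G.adjMatrix ℝ).mulVec a := by
    intro a b
    rw [Matrix.dotProduct_mulVec, ← Matrix.mulVec_transpose, SimpleGraph.transpose_adjMatrix,
      dotProduct_comm]
  have hd : (Pi.single u t - Pi.single v t : Fin n → ℝ) ⬝ᵥ
      (G.adjMatrix ℝ).mulVec (Pi.single u t - Pi.single v t) = 0 := by
    simp [Matrix.mulVec_sub, sub_dotProduct, h, h']
  rw [fG_eq_dotProduct, fG_eq_dotProduct, Matrix.mulVec_add, dotProduct_add, add_dotProduct,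
    add_dotProduct, hd, key x (_ - _), sub_dotProduct,
    single_dotProduct, single_dotProduct]
  ring

/-- The symmetrization step: a point of the simplex whose support contains two distinct
non-adjacent vertices can be replaced by one with strictly smaller support. -/
lemma exists_smaller_support_s11 {n : ℕ} (G : SimpleGraph (Fin n)) (x : Fin n → ℝ)
    (hx : x ∈ stdSimplex ℝ (Fin n)) {u v : Fin n} (hu : x u ≠ 0) (hv : x v ≠ 0)
    (huv : u ≠ v) (h : ¬ G.Adj u v) :
    ∃ y ∈ stdSimplex ℝ (Fin n), fG G x ≤ fG G y ∧
      (Finset.univ.filter fun i => y i ≠ 0).card <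
        (Finset.univ.filter fun i => x i ≠ 0).card := by
  wlog hle : (G.adjMatrix ℝ).mulVec x v ≤ (G.adjMatrix ℝ).mulVec x u generalizing u v
  · exact this hv hu huv.symm (fun k => h k.symm) (not_le.mp hle).le
  have hval : ∀ i, (x + (Pi.single u (x v) - Pi.single v (x v)) : Fin n → ℝ) i =
      if i = u then x u + x v else if i = v then 0 else x i := by
    intro i
    by_cases h1 : i = u
    · subst h1; simp [huv]
    · by_cases h2 : i = v
      · subst h2; simp [h1]
      · simp [h1, h2]
  refine ⟨x + (Pi.single u (x v) - Pi.single v (x v)), ⟨fun i => ?_, ?_⟩, ?_, ?_⟩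
  · rw [hval]
    split_ifs
    · exact add_nonneg (hx.1 u) (hx.1 v)
    · exact le_rfl
    · exact hx.1 i
  · simp [Finset.sum_add_distrib, hx.2]
  · rw [fG_shift G x h]
    exact le_add_of_nonneg_right (mul_nonneg (hx.1 v) (sub_nonneg.mpr hle))
  · refine Finset.card_lt_card ((Finset.ssubset_iff_of_subset fun i hi => ?_).mpr ⟨v, ?_, ?_⟩)
    · rw [Finset.mem_filter, hval] at hi
      refine Finset.mem_filter.mpr ⟨Finset.mem_univ i, ?_⟩
      by_cases h1 : i = u
      · exact h1 ▸ hu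
      · by_cases h2 : i = v
        · exact h2 ▸ hv
        · simpa [h1, h2] using hi
    · simp [hv]
    · rw [Finset.mem_filter, hval]
      simp [huv.symm]

/-- (Motzkin–Straus) For a graph `G` on `n` vertices and `x` in the standard simplex, there
is `y` in the simplex with `f(G,x) ≤ f(G,y)` whose support induces a complete subgraph. -/
theorem motzkin_straus_symmetrization
    (n : ℕ) (G : SimpleGraph (Fin n)) (x : Fin n → ℝ)
    (hx : x ∈ stdSimplex ℝ (Fin n)) :
    ∃ y ∈ stdSimplex ℝ (Fin n), fG G x ≤ fG G y ∧
      ∀ u v : Fin n, y u ≠ 0 → y v ≠ 0 → u ≠ v → G.Adj u v := by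
  induction hk : (Finset.univ.filter fun i => x i ≠ 0).card using Nat.strong_induction_on
    generalizing x with
  | _ k ih =>
    by_cases hc : ∀ u v : Fin n, x u ≠ 0 → x v ≠ 0 → u ≠ v → G.Adj u v
    · exact ⟨x, hx, le_rfl, hc⟩
    · push Not at hc
      obtain ⟨u, v, hu, hv, huv, h⟩ := hc
      obtain ⟨y, hy, hxy, hlt⟩ := exists_smaller_support_s11 G x hx hu hv huv h
      obtain ⟨z, hz, hyz, hcl⟩ := ih _ (hk ▸ hlt) y hy rfl
      exact ⟨z, hz, hxy.trans hyz, hcl⟩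
end

section
/- Let a, b, c be nonnegative integers with a ≥ 2, let n = a + b + c, and let e be an integer with b·c ≤ e ≤ a(a−1)/2 + a·b + b·c. Then there exists a simple graph G with n vertices and e edges in which at least b·c edges lie in no triangle of G; consequently Tr(n, e) ≤ e − b·c. -/
/-!
Split the vertices into `A`, `B`, `C` of sizes `a`, `b`, `c`, and join all pairs inside `A`, all
pairs between `A` and `B`, and all pairs between `B` and `C`. A vertex of `C` has all its
neighbours in `B`, and `B` is independent, so no edge between `B` and `C` lies in a triangle. This
persists in every subgraph, and as the full graph has `a(a-1)/2 + ab + bc` edges, any number `e` of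
edges in the stated range is attained by a subgraph containing all the `B`-`C` edges
(`cliqueEdges`, `abEdges` and `bcEdges` are the three families). Each such subgraph has at most
`e - bc` edges in triangles, which gives the bound on `TrNum`.
-/

open scoped Classical

/-- All pairs inside `A`, the first `a` vertices of `Fin (a + b + c)`. -/
noncomputable def cliqueEdges (a b c : ℕ) : Finset (Sym2 (Fin (a + b + c))) :=
  (⊤ : SimpleGraph (Fin a)).edgeFinset.image
    (Sym2.map (Fin.castLE (by omega : a ≤ a + b + c)))

/-- All pairs between `A` and the block `B` of the next `b` vertices. -/
noncomputable def abEdges (a b c : ℕ) : Finset (Sym2 (Fin (a + b + c))) :=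
  (Finset.univ : Finset (Fin a × Fin b)).image
    (fun p => s(⟨p.1, by omega⟩, ⟨a + p.2, by omega⟩))

/-- All pairs between `B` and the block `C` of the last `c` vertices. -/
noncomputable def bcEdges (a b c : ℕ) : Finset (Sym2 (Fin (a + b + c))) :=
  (Finset.univ : Finset (Fin b × Fin c)).image
    (fun p => s(⟨a + p.1, by omega⟩, ⟨a + b + p.2, by omega⟩))

lemma card_cliqueEdges (a b c : ℕ) : (cliqueEdges a b c).card = a * (a - 1) / 2 := by
  rw [cliqueEdges, Finset.card_image_of_injective _
    (Sym2.map.injective (Fin.castLE_injective _)),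
    SimpleGraph.card_edgeFinset_top_eq_card_choose_two, Fintype.card_fin, Nat.choose_two_right]

lemma card_abEdges (a b c : ℕ) : (abEdges a b c).card = a * b := by
  rw [abEdges, Finset.card_image_of_injective]
  · simp
  · rintro ⟨i, j⟩ ⟨i', j'⟩ h
    simp only [Sym2.eq_iff, Prod.mk.injEq, Fin.ext_iff] at h ⊢
    omega

lemma card_bcEdges (a b c : ℕ) : (bcEdges a b c).card = b * c := by
  rw [bcEdges, Finset.card_image_of_injective]
  · simp
  · rintro ⟨i, j⟩ ⟨i', j'⟩ h
    simp only [Sym2.eq_iff, Prod.mk.injEq, Fin.ext_iff] at h ⊢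
    omega

lemma mem_cliqueEdges {a b c : ℕ} {u v : Fin (a + b + c)} (h : s(u, v) ∈ cliqueEdges a b c) :
    u.val < a ∧ v.val < a ∧ u ≠ v := by
  simp only [cliqueEdges, Finset.mem_image] at h
  obtain ⟨x, hx, h⟩ := h
  induction x with
  | _ i j =>
    simp only [SimpleGraph.mem_edgeFinset, SimpleGraph.mem_edgeSet, SimpleGraph.top_adj, ne_eq,
      Sym2.map_mk, Sym2.eq_iff, Fin.ext_iff, Fin.val_castLE] at hx h ⊢
    omega

lemma mem_abEdges {a b c : ℕ} {u v : Fin (a + b + c)} (h : s(u, v) ∈ abEdges a b c) :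
    (u.val < a ∧ a ≤ v.val ∧ v.val < a + b) ∨ (v.val < a ∧ a ≤ u.val ∧ u.val < a + b) := by
  simp only [abEdges, Finset.mem_image, Finset.mem_univ, true_and] at h
  obtain ⟨⟨i, j⟩, h⟩ := h
  simp only [Sym2.eq_iff, Fin.ext_iff] at h
  omega

lemma mem_bcEdges {a b c : ℕ} {u v : Fin (a + b + c)} (h : s(u, v) ∈ bcEdges a b c) :
    (a ≤ u.val ∧ u.val < a + b ∧ a + b ≤ v.val) ∨
      (a ≤ v.val ∧ v.val < a + b ∧ a + b ≤ u.val) := by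
  simp only [bcEdges, Finset.mem_image, Finset.mem_univ, true_and] at h
  obtain ⟨⟨i, j⟩, h⟩ := h
  simp only [Sym2.eq_iff, Fin.ext_iff] at h
  omega

/-- Edge set of the full graph described at the top. -/
noncomputable def fullEdges (a b c : ℕ) : Finset (Sym2 (Fin (a + b + c))) :=
  cliqueEdges a b c ∪ abEdges a b c ∪ bcEdges a b c

lemma card_fullEdges (a b c : ℕ) :
    (fullEdges a b c).card = a * (a - 1) / 2 + a * b + b * c := by
  rw [fullEdges, Finset.card_union_of_disjoint, Finset.card_union_of_disjoint, card_cliqueEdges,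
    card_abEdges, card_bcEdges]
  · rw [Finset.disjoint_left]
    rintro ⟨u, v⟩ h1 h2
    have := mem_cliqueEdges h1
    have := mem_abEdges h2
    omega
  · rw [Finset.disjoint_left]
    rintro ⟨u, v⟩ h1 h2
    have h3 := mem_bcEdges h2
    rcases Finset.mem_union.1 h1 with h1 | h1
    · have := mem_cliqueEdges h1
      omega
    · have := mem_abEdges h1
      omega

lemma mem_fullEdges {a b c : ℕ} {u v : Fin (a + b + c)} (h : s(u, v) ∈ fullEdges a b c) :
    (u.val < a ∧ v.val < a ∧ u ≠ v) ∨
    ((u.val < a ∧ a ≤ v.val ∧ v.val < a + b) ∨ (v.val < a ∧ a ≤ u.val ∧ u.val < a + b)) ∨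
    ((a ≤ u.val ∧ u.val < a + b ∧ a + b ≤ v.val) ∨
      (a ≤ v.val ∧ v.val < a + b ∧ a + b ≤ u.val)) := by
  simp only [fullEdges, Finset.mem_union] at h
  rcases h with (h | h) | h
  · exact Or.inl (mem_cliqueEdges h)
  · exact Or.inr (Or.inl (mem_abEdges h))
  · exact Or.inr (Or.inr (mem_bcEdges h))

/-- In a subgraph of the full graph, no `B`-`C` pair lies in a triangle. -/
lemma not_triangularEdge_of_mem_bcEdges {a b c : ℕ} {G : SimpleGraph (Fin (a + b + c))}
    (hG : G.edgeSet ⊆ fullEdges a b c) {x : Sym2 (Fin (a + b + c))} (hx : x ∈ bcEdges a b c) :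
    ¬ triangularEdge G x := by
  rintro ⟨u, v, rfl, -, w, huw, hvw⟩
  have h1 := mem_bcEdges hx
  have h2 := mem_fullEdges (hG (G.mem_edgeSet.2 huw))
  have h3 := mem_fullEdges (hG (G.mem_edgeSet.2 hvw))
  omega

/-- For nonnegative integers `a ≥ 2`, `b`, `c` with `n = a + b + c` and
`b·c ≤ e ≤ a(a-1)/2 + a·b + b·c`, there is a simple graph with `n` vertices and `e` edges
in which at least `b·c` edges lie in no triangle; consequently `Tr(n,e) ≤ e - b·c`. -/
theorem exists_graph_many_nontriangular_edges
    (a b c : ℕ) (ha : 2 ≤ a) (n e : ℕ) (hn : n = a + b + c)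
    (he1 : b * c ≤ e) (he2 : e ≤ a * (a - 1) / 2 + a * b + b * c) :
    (∃ G : SimpleGraph (Fin n), G.edgeSet.ncard = e ∧
      b * c ≤ {ed ∈ G.edgeSet | ¬ triangularEdge G ed}.ncard) ∧
    TrNum n e ≤ e - b * c := by
  subst hn
  obtain ⟨F, hSF, hFT, hF⟩ := Finset.exists_subsuperset_card_eq
    (Finset.subset_union_right : bcEdges a b c ⊆ fullEdges a b c)
    ((card_bcEdges a b c).trans_le he1) (he2.trans_eq (card_fullEdges a b c).symm)
  let G := SimpleGraph.fromEdgeSet (F : Set (Sym2 (Fin (a + b + c))))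
  have hGF : G.edgeSet = F := by
    rw [SimpleGraph.edgeSet_fromEdgeSet, sdiff_eq_left, Set.disjoint_left]
    rintro ⟨u, v⟩ hx hd
    have h := mem_fullEdges (hFT hx)
    have huv : u = v := hd
    subst huv
    omega
  have hcard : G.edgeSet.ncard = e := by rw [hGF, Set.ncard_coe_finset, hF]
  have hbc : b * c ≤ {ed ∈ G.edgeSet | ¬ triangularEdge G ed}.ncard := by
    rw [← card_bcEdges a b c, ← Set.ncard_coe_finset]
    refine Set.ncard_le_ncard (fun x hx => ⟨?_, ?_⟩) (Set.toFinite _)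
    · rw [hGF]
      exact hSF hx
    · refine not_triangularEdge_of_mem_bcEdges ?_ hx
      rw [hGF]
      exact_mod_cast hFT
  refine ⟨⟨G, hcard, hbc⟩, ?_⟩
  have hle : TrNum (a + b + c) e ≤ trCount G := Nat.sInf_le ⟨G, hcard, rfl⟩
  have hsplit : trCount G + {ed ∈ G.edgeSet | ¬ triangularEdge G ed}.ncard = e := by
    rw [trCount, ← hcard, ← Set.ncard_union_eq _ (Set.toFinite _) (Set.toFinite _)]
    · congr 1
      ext x
      simp only [Set.mem_union, Set.mem_ofPred_eq]
      tauto
    · exact Set.disjoint_left.2 fun x h1 h2 => h2.2 h1.2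
  omega
end

section
/- Let G be a simple graph on n vertices v₁, …, vₙ in which v₁v₂ is an edge lying in no triangle of G (i.e., v₁ and v₂ have no common neighbor), and let y ∈ Sₙ with y₁ ≥ y₂. Set a := Σ_{k ≠ 1,2} y_k. Then f(G, y) ≤ y₁·y₂ + y₁·a + a²/2. -/
/-! Split the double sum along `{v₁, v₂}` and its complement `R`, and let `a` be the weight of `R`.
The pairs inside `R` contribute at most `a²` to the double sum. A vertex of `R` is adjacent to at
most one of `v₁, v₂`, so since `y v₂ ≤ y v₁` its edges to them have weight at most `y v₁` times its
own weight; this gives at most `y v₁ * a` in either order of the pair. The edge `v₁v₂` itself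
contributes `y v₁ * y v₂` twice. Halving gives the bound. -/

open scoped Classical

/-- If `v₁v₂` is an edge of `G` lying in no triangle (no common neighbor), `y` is in the
standard simplex with `y₁ ≥ y₂`, and `a = Σ_{k ≠ 1,2} y_k`, then
`f(G, y) ≤ y₁·y₂ + y₁·a + a²/2`. -/
theorem f_le_of_nontriangular_edge
    (n : ℕ) (G : SimpleGraph (Fin n)) (v₁ v₂ : Fin n)
    (hadj : G.Adj v₁ v₂)
    (htri : ∀ w : Fin n, ¬ (G.Adj v₁ w ∧ G.Adj v₂ w))
    (y : Fin n → ℝ) (hy : y ∈ stdSimplex ℝ (Fin n)) (h12 : y v₂ ≤ y v₁) :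
    fG G y ≤ y v₁ * y v₂ + y v₁ * (∑ k ∈ Finset.univ \ {v₁, v₂}, y k) +
      (∑ k ∈ Finset.univ \ {v₁, v₂}, y k) ^ 2 / 2 := by
  have hne : v₁ ≠ v₂ := hadj.ne
  have hpos : ∀ i, 0 ≤ y i := hy.1
  have split : ∀ g : Fin n → ℝ,
      ∑ i, g i = ∑ i ∈ Finset.univ \ {v₁, v₂}, g i + (g v₁ + g v₂) := by
    intro g
    rw [← Finset.sum_sdiff (Finset.subset_univ {v₁, v₂}), Finset.sum_pair hne]
  unfold fG
  simp only [split]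
  set R := Finset.univ \ {v₁, v₂}
  have hRR : ∑ i ∈ R, ∑ j ∈ R, (if G.Adj i j then y i * y j else 0) ≤ (∑ k ∈ R, y k) ^ 2 := by
    rw [sq, Finset.sum_mul_sum]
    refine Finset.sum_le_sum fun i _ => Finset.sum_le_sum fun j _ => ?_
    split_ifs
    · exact le_rfl
    · exact mul_nonneg (hpos i) (hpos j)
  have hR : ∑ i ∈ R, ((if G.Adj i v₁ then y i * y v₁ else 0) +
      (if G.Adj i v₂ then y i * y v₂ else 0)) ≤ y v₁ * ∑ k ∈ R, y k := by
    rw [Finset.mul_sum]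
    refine Finset.sum_le_sum fun i _ => ?_
    have h1 := mul_nonneg (hpos i) (hpos v₁)
    have h2 := mul_le_mul_of_nonneg_left h12 (hpos i)
    have h3 := htri i
    rw [G.adj_comm v₁ i, G.adj_comm v₂ i] at h3
    split_ifs with ha hb
    · exact absurd ⟨ha, hb⟩ h3
    all_goals linarith
  have hsymm : ∀ v, ∑ j ∈ R, (if G.Adj v j then y v * y j else 0) =
      ∑ i ∈ R, (if G.Adj i v then y i * y v else 0) := by
    intro v
    refine Finset.sum_congr rfl fun i _ => ?_
    rw [G.adj_comm, mul_comm]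
  rw [Finset.sum_add_distrib, hsymm v₁, hsymm v₂]
  have hR' := hR
  rw [Finset.sum_add_distrib] at hR'
  simp only [SimpleGraph.irrefl, hadj, hadj.symm, if_true, if_false]
  linarith [mul_comm (y v₁) (y v₂)]
end
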